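/- arXiv:1708.08124 — 7 statements merged into one kernel-verified Lean document; each statement's English description precedes it below -/
import Mathlib

section
/- Let R be an integral domain with fraction field K, let Ω be an algebraic closure of K, let n be a natural number, and let M be an n × n matrix over R. Assume that the image of the characteristic polynomial of M under the map R[X] → Ω[X] is squarefree. Then for every polynomial f ∈ R[X] one has f(M) = 0 if and only if the characteristic polynomial of M divides f in R[X]. -/
/-!
Divisibility by the characteristic polynomial gives annihilation by Cayley–Hamilton. Conversely,
pass to the algebraically closed field `Ω`. If `f` annihilates `M`, then every eigenvalue `μ` of `M`
satisfies `f(μ) = 0`, because `f(μ)` lies in the spectrum of `f(M) = 0`. The characteristic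
polynomial is a product of distinct linear factors over `Ω`, so it divides `f` in `Ω[X]`
(`charpoly_dvd_of_aeval_eq_zero`). As it is monic, division with remainder commutes with the
injective base change `R → Ω`, and divisibility descends to `R[X]`.
-/

theorem charpoly_dvd_of_aeval_eq_zero {F : Type*} [Field F] [IsAlgClosed F] {n : ℕ}
    (N : Matrix (Fin n) (Fin n) F) (h : Squarefree N.charpoly) (f : Polynomial F)
    (hf : Polynomial.aeval N f = 0) : N.charpoly ∣ f := by
  rcases eq_or_ne f 0 with rfl | hf0
  · exact dvd_zero _
  have hp0 : N.charpoly ≠ 0 := N.charpoly_monic.ne_zero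
  have hnodup : N.charpoly.roots.Nodup :=
    Polynomial.nodup_roots (PerfectField.separable_iff_squarefree.2 h)
  rw [IsAlgClosed.dvd_iff_roots_le_roots hp0 hf0, Multiset.le_iff_subset hnodup]
  intro μ hμ
  have hroot := (Polynomial.mem_roots hp0).1 hμ
  have hspec : μ ∈ spectrum F N := by
    rw [spectrum.mem_iff, Matrix.isUnit_iff_isUnit_det, isUnit_iff_ne_zero, not_not]
    rw [Polynomial.IsRoot.def, Matrix.eval_charpoly] at hroot
    exact hroot
  have hzero := spectrum.subset_polynomial_aeval N f ⟨μ, hspec, rfl⟩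
  rw [hf, spectrum.mem_iff, sub_zero] at hzero
  rw [Polynomial.mem_roots hf0, Polynomial.IsRoot.def]
  by_contra hne
  exact hzero ((isUnit_iff_ne_zero.2 hne).map _)

/-- Let `R` be an integral domain with fraction field `K` and `Ω` an
algebraic closure of `K`. If the characteristic polynomial of a square matrix `M` over
`R` becomes squarefree in `Ω[X]`, then a polynomial `f ∈ R[X]` annihilates `M` if and
only if the characteristic polynomial of `M` divides `f` in `R[X]`. -/
theorem aeval_eq_zero_iff_charpoly_dvd {R : Type*} [CommRing R] [IsDomain R] {n : ℕ}
    (M : Matrix (Fin n) (Fin n) R)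
    (h : Squarefree (Polynomial.map
      ((algebraMap (FractionRing R) (AlgebraicClosure (FractionRing R))).comp
        (algebraMap R (FractionRing R))) M.charpoly)) :
    ∀ f : Polynomial R, Polynomial.aeval M f = 0 ↔ M.charpoly ∣ f := by
  intro f
  constructor
  · intro hf
    set φ := (algebraMap (FractionRing R) (AlgebraicClosure (FractionRing R))).comp
      (algebraMap R (FractionRing R))
    have hφ : Function.Injective φ :=
      (algebraMap (FractionRing R) (AlgebraicClosure (FractionRing R))).injective.comp
        (IsFractionRing.injective R (FractionRing R))
    rw [← Polynomial.map_dvd_map φ hφ M.charpoly_monic]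
    rw [← Matrix.charpoly_map] at h ⊢
    refine charpoly_dvd_of_aeval_eq_zero _ h _ ?_
    have key := Polynomial.map_aeval_eq_aeval_map (φ := φ) (ψ := φ.mapMatrix (m := Fin n))
      (by ext r i j; simp [Matrix.algebraMap_matrix_apply, apply_ite φ]) f M
    rw [hf, map_zero] at key
    exact key.symm
  · rintro ⟨g, rfl⟩
    rw [map_mul, Matrix.aeval_self_charpoly, zero_mul]
end

section
/- Let A' be a commutative ring, let I ⊆ A' be a nilpotent ideal, and set A = A'/I. For every étale A-algebra B there exists an étale A'-algebra B' together with an isomorphism of A-algebras A ⊗_{A'} B' ≅ B (equivalently, an A-algebra isomorphism B'/IB' ≅ B). -/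
/-!
An étale `A`-algebra `B` is standard smooth of relative dimension `0`: it has a presentation
`A[x₁, …, xₙ]/(f₁, …, fₙ)` whose Jacobian determinant is a unit of `B`. Since `A' → A` is
surjective, the `fᵢ` lift to polynomials over `A'`; the algebra `B'` is the quotient of
`A'[x₁, …, xₙ]` by these lifts. The Jacobian determinant of `B'` maps to that of `B` under
`B' → B'/IB' ≅ A ⊗ B' ≅ B`, and `IB'` is nilpotent, so it is a unit already in `B'`. Hence `B'` is
standard smooth of relative dimension `0` over `A'`, that is, étale.
-/

open TensorProduct

universe u

/-- Units are detected modulo a nilpotent ideal of the base ring. -/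
lemma isUnit_of_isUnit_one_tmul {A' M : Type*} [CommRing A'] [CommRing M] [Algebra A' M]
    {I : Ideal A'} (hI : IsNilpotent I) {x : M}
    (hx : IsUnit ((1 : A' ⧸ I) ⊗ₜ[A'] x)) : IsUnit x := by
  have hIM : IsNilpotent (I.map (algebraMap A' M)) := by
    obtain ⟨n, hn⟩ := hI
    exact ⟨n, by rw [← Ideal.map_pow, hn, Submodule.zero_eq_bot, Ideal.map_bot,
      Submodule.zero_eq_bot]⟩
  rw [← hIM.isUnit_quotient_mk_iff]
  have h := hx.map (Algebra.TensorProduct.quotIdealMapEquivQuotTensor M I).symm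
  rwa [← Algebra.TensorProduct.quotIdealMapEquivQuotTensor_mk, AlgEquiv.symm_apply_apply] at h

/-- Let `I` be a nilpotent ideal of a commutative ring `A'` and set
`A = A'/I`.  Every étale `A`-algebra `B` lifts to an étale `A'`-algebra `B'`, together
with an `A`-algebra isomorphism `A ⊗[A'] B' ≃ B`. -/
theorem etale_lift_of_nilpotent (A' : Type u) [CommRing A'] (I : Ideal A')
    (hI : IsNilpotent I)
    (B : Type u) [CommRing B] [Algebra (A' ⧸ I) B] [Algebra.Etale (A' ⧸ I) B] :
    ∃ (B' : Type u) (_ : CommRing B') (_ : Algebra A' B'),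
      Algebra.Etale A' B' ∧
        Nonempty (((A' ⧸ I) ⊗[A'] B') ≃ₐ[A' ⧸ I] B) := by
  classical
  obtain ⟨ι, σ, _, _, P, hP⟩ :=
    (Algebra.Etale.iff_isStandardSmoothOfRelativeDimension_zero (R := A' ⧸ I) (S := B)).mp
      inferInstance
  let : Fintype σ := Fintype.ofFinite σ
  let : Algebra A' B := ((algebraMap (A' ⧸ I) B).comp (algebraMap A' (A' ⧸ I))).toAlgebra
  have : IsScalarTower A' (A' ⧸ I) B := .of_algebraMap_eq fun _ ↦ rfl
  have : P.HasCoeffs A' :=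
    ⟨fun x _ ↦ Ideal.Quotient.mk_surjective x⟩
  let e := P.tensorModelOfHasCoeffsEquiv A'
  let Q₀ := P.toPreSubmersivePresentation.ofHasCoeffs A'
  have hJ : Q₀.jacobian = Ideal.Quotient.mk _ (P.jacobianOfHasCoeffs A') := by
    rw [Algebra.PreSubmersivePresentation.jacobian_eq_jacobiMatrix_det]
    have hdet : P.jacobianOfHasCoeffs A' = Q₀.jacobiMatrix.det := by
      rw [Algebra.SubmersivePresentation.jacobianOfHasCoeffs]
    rw [hdet]
    rfl
  let Q : Algebra.SubmersivePresentation A' (P.ModelOfHasCoeffs A') ι σ :=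
    { __ := Q₀
      jacobian_isUnit := by
        change IsUnit Q₀.jacobian
        refine isUnit_of_isUnit_one_tmul hI ?_
        rw [hJ, ← P.tensorModelOfHasCoeffsEquiv_symm_tmul, P.aeval_jacobianOfHasCoeffs]
        exact P.jacobian_isUnit.map e.symm }
  have : Algebra.IsStandardSmoothOfRelativeDimension 0 A' (P.ModelOfHasCoeffs A') :=
    Q.isStandardSmoothOfRelativeDimension hP
  exact ⟨P.ModelOfHasCoeffs A', inferInstance, inferInstance, inferInstance, ⟨e⟩⟩
end

section
/- Let A' be a commutative ring and I ⊆ A' a nilpotent ideal. Let B' be a formally étale A'-algebra and let C' be any A'-algebra. Then the reduction map Hom_{A'-alg}(B', C') → Hom_{(A'/I)-alg}(B'/IB', C'/IC') is a bijection. In particular, if B' and C' are étale A'-algebras, any (A'/I)-algebra isomorphism B'/IB' ≅ C'/IC' lifts to a unique A'-algebra homomorphism B' → C' inducing it. -/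
/-!
Since `I` is nilpotent, so is `IC'`. An `(A'/I)`-algebra map `B'/IB' → C'/IC'` is the same thing as
an `A'`-algebra map `B' → C'/IC'`, because any such map kills `IB'`. Reduction thereby becomes
composition with `C' → C'/IC'`, and a formally étale algebra has unique lifting along quotients by
nilpotent ideals: `Algebra.FormallyUnramified.ext` gives injectivity and
`Algebra.FormallySmooth.lift` gives surjectivity.
-/

universe u

variable {A' : Type u} [CommRing A'] (I : Ideal A')
variable {B' : Type u} [CommRing B'] [Algebra A' B']
variable {C' : Type u} [CommRing C'] [Algebra A' C']

/-- The reduction of an `A'`-algebra homomorphism `f : B' → C'` modulo a nilpotent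
ideal `I ⊆ A'`: the induced `(A'/I)`-algebra homomorphism `B'/IB' → C'/IC'`. -/
noncomputable def reduceMod (f : B' →ₐ[A'] C') :
    (B' ⧸ (I.map (algebraMap A' B'))) →ₐ[A' ⧸ I] (C' ⧸ (I.map (algebraMap A' C'))) :=
  { Ideal.quotientMap (I.map (algebraMap A' C')) (f : B' →+* C')
      (by
        rw [Ideal.map_le_iff_le_comap, Ideal.comap_comap, AlgHom.comp_algebraMap]
        exact Ideal.le_comap_map) with
    commutes' := fun r => by
      obtain ⟨a, rfl⟩ := Ideal.Quotient.mk_surjective r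
      simp only [RingHom.toFun_eq_coe, Ideal.Quotient.algebraMap_quotient_map_quotient,
        Ideal.quotientMap_mk, RingHom.coe_coe, AlgHom.commutes] }

/-- Let `I` be a nilpotent ideal of `A'`, let `B'` be a formally
étale `A'`-algebra and `C'` any `A'`-algebra.  Then the reduction map
`Hom_{A'}(B', C') → Hom_{A'/I}(B'/IB', C'/IC')` is a bijection. -/
theorem reduceMod_bijective (hI : IsNilpotent I) [Algebra.FormallyEtale A' B'] :
    Function.Bijective
      (fun f : B' →ₐ[A'] C' => reduceMod I f) := by
  have hC : IsNilpotent (I.map (algebraMap A' C')) := by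
    obtain ⟨n, hn⟩ := hI
    exact ⟨n, by rw [← Ideal.map_pow, hn, Ideal.zero_eq_bot, Ideal.map_bot, Ideal.zero_eq_bot]⟩
  constructor
  · intro f g h
    refine Algebra.FormallyUnramified.ext (I.map (algebraMap A' C')) hC fun b => ?_
    exact DFunLike.congr_fun h (Ideal.Quotient.mk (I.map (algebraMap A' B')) b)
  · intro φ
    let ψ : B' →ₐ[A'] C' ⧸ I.map (algebraMap A' C') :=
      (φ.restrictScalars A').comp (Ideal.Quotient.mkₐ A' (I.map (algebraMap A' B')))
    refine ⟨Algebra.FormallySmooth.lift (I.map (algebraMap A' C')) hC ψ, ?_⟩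
    refine AlgHom.ext fun x => ?_
    obtain ⟨b, rfl⟩ := Ideal.Quotient.mk_surjective x
    exact Algebra.FormallySmooth.mk_lift (I.map (algebraMap A' C')) hC ψ b
end

section
/- Let f : A → B and g : B' → B be homomorphisms of commutative rings with g surjective and ker(g) nilpotent, and let A' = A ×_B B' be the fiber product ring {(a, b') ∈ A × B' : f(a) = g(b')}, with projections to A and B'. Let M be a flat A-module, N' a flat B'-module, and β : B ⊗_A M ≅ B ⊗_{B'} N' an isomorphism of B-modules. Define M' = {(m, n') ∈ M × N' : β(1 ⊗ m) = 1 ⊗ n'}, an A'-module with (a, b')·(m, n') = (a·m, b'·n'). Then: (1) M' is a flat A'-module; (2) the natural A-linear map A ⊗_{A'} M' → M sending a ⊗ (m, n') to a·m is an isomorphism; and (3) the natural B'-linear map B' ⊗_{A'} M' → N' sending b' ⊗ (m, n') to b'·n' is an isomorphism. -/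
/-!
Write `A' = A ×_B B'`, `M'` for the glued module, and `J = ker g`, identified with the ideal
`I = {(0, j)} = ker (A' → A)` of `A'`.

*Base change.* The second components of `M'` generate `N'` over `B'` (`span_snd_milnorGlued`):
they do so modulo `J`, as `β` is onto, and `{0} × J N'` lies in `M'`. Hence `J N'` is already
spanned by products of `I` with second components of `M'`, so the kernel `{0} × J N'` of `M' → M`
equals `I M'`, which gives `A ⊗ M' = M' / I M' ≃ M`. For `N'`, surjectivity of `B' ⊗ M' → N'` is the
generation statement. An element `x` of its kernel dies in `B ⊗_A M ≃ B ⊗_{A'} M'`, so it comes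
from `J ⊗ M'`; since `J` sits inside `A'`, this makes `x = 1 ⊗ y` with `y = (0, n)`, and `n` is the
image of `x`, so `x = 0`.

*Flatness.* This is the local criterion for a nilpotent ideal (`flat_of_nilpotent_ker`): `M'` is
flat over `A'` once `M' / I M' = M` is flat over `A = A' / I` and `I ⊗ M' → M'` is injective. The
latter holds because `I ⊗_{A'} M' = J ⊗_{B'} N'` and `N'` is flat. The criterion itself is proved
without `Tor`: an inclusion `Y ⊆ Z` with `I Z ⊆ Y` stays injective after tensoring, by the four
lemma when `Z` is free and by presenting `Z` as a quotient of a free module in general; an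
arbitrary ideal `𝔞` is then reached through the chain `𝔞 + I ^ k`.
-/

set_option synthInstance.maxHeartbeats 1000000

open TensorProduct

variable (A B B' : Type*) [CommRing A] [CommRing B] [CommRing B']
  [Algebra A B] [Algebra B' B]

/-- The fiber product ring `A' = A ×_B B'` as a subring of `A × B'`. -/
def milnorRing : Subring (A × B') where
  carrier := {p | algebraMap A B p.1 = algebraMap B' B p.2}
  mul_mem' := fun {p q} hp hq => by
    simp only [Set.mem_setOf_eq, Prod.fst_mul, Prod.snd_mul, map_mul] at *
    rw [hp, hq]
  one_mem' := by simp
  add_mem' := fun {p q} hp hq => by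
    simp only [Set.mem_setOf_eq, Prod.fst_add, Prod.snd_add, map_add] at *
    rw [hp, hq]
  zero_mem' := by simp
  neg_mem' := fun {p} hp => by
    simp only [Set.mem_setOf_eq, Prod.fst_neg, Prod.snd_neg, map_neg] at *
    rw [hp]

/-- First projection `A' → A`. -/
def milnorFst : milnorRing A B B' →+* A :=
  (RingHom.fst A B').comp (milnorRing A B B').subtype

/-- Second projection `A' → B'`. -/
def milnorSnd : milnorRing A B B' →+* B' :=
  (RingHom.snd A B').comp (milnorRing A B B').subtype

/-- Any `A`-module is an `A'`-module via the first projection. -/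
noncomputable instance milnorModuleOfFst (M : Type*) [AddCommGroup M] [Module A M] :
    Module (milnorRing A B B') M :=
  Module.compHom M (milnorFst A B B')

/-- Any `B'`-module is an `A'`-module via the second projection. -/
noncomputable instance milnorModuleOfSnd (N : Type*) [AddCommGroup N] [Module B' N] :
    Module (milnorRing A B B') N :=
  Module.compHom N (milnorSnd A B B')

variable (M N' : Type*) [AddCommGroup M] [Module A M] [AddCommGroup N'] [Module B' N']

/-- The glued module `M' = {(m, n') : β (1 ⊗ m) = 1 ⊗ n'}`, an `A'`-submodule of
`M × N'`. -/
def milnorGlued (β : (B ⊗[A] M) ≃ₗ[B] (B ⊗[B'] N')) :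
    Submodule (milnorRing A B B') (M × N') where
  carrier := {p | β ((1 : B) ⊗ₜ[A] p.1) = (1 : B) ⊗ₜ[B'] p.2}
  add_mem' := fun {p q} hp hq => by
    simp only [Set.mem_setOf_eq, Prod.fst_add, Prod.snd_add, TensorProduct.tmul_add,
      map_add] at *
    rw [hp, hq]
  zero_mem' := by simp
  smul_mem' := by
    rintro ⟨⟨a, b⟩, hab⟩ p hp
    simp only [Set.mem_setOf_eq] at hp hab ⊢
    show β ((1 : B) ⊗ₜ[A] (a • p.1)) = (1 : B) ⊗ₜ[B'] (b • p.2)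
    have h1 : (1 : B) ⊗ₜ[A] (a • p.1)
        = algebraMap A B a • ((1 : B) ⊗ₜ[A] p.1) := by
      rw [TensorProduct.tmul_smul, algebraMap_smul]
    have h2 : (1 : B) ⊗ₜ[B'] (b • p.2)
        = algebraMap B' B b • ((1 : B) ⊗ₜ[B'] p.2) := by
      rw [TensorProduct.tmul_smul, algebraMap_smul]
    rw [h1, h2, map_smul, hp, hab]

/-- The natural map `A ⊗[A'] M' → M`, `a ⊗ (m, n') ↦ a • m`. -/
noncomputable def milnorToM (β : (B ⊗[A] M) ≃ₗ[B] (B ⊗[B'] N')) :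
    (A ⊗[milnorRing A B B'] (milnorGlued A B B' M N' β))
      →ₗ[milnorRing A B B'] M :=
  TensorProduct.lift
    (LinearMap.mk₂ (milnorRing A B B')
      (fun a p => a • (p : M × N').1)
      (fun a₁ a₂ p => add_smul a₁ a₂ _)
      (fun c a p => by
        show (milnorFst A B B' c * a) • (p : M × N').1
          = milnorFst A B B' c • (a • (p : M × N').1)
        rw [mul_smul])
      (fun a p q => by
        show a • ((p : M × N').1 + (q : M × N').1)
          = a • (p : M × N').1 + a • (q : M × N').1
        rw [smul_add])
      (fun c a p => by
        show a • (milnorFst A B B' c • (p : M × N').1)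
          = milnorFst A B B' c • (a • (p : M × N').1)
        rw [← mul_smul, mul_comm, mul_smul]))

/-- The natural map `B' ⊗[A'] M' → N'`, `b' ⊗ (m, n') ↦ b' • n'`. -/
noncomputable def milnorToN' (β : (B ⊗[A] M) ≃ₗ[B] (B ⊗[B'] N')) :
    (B' ⊗[milnorRing A B B'] (milnorGlued A B B' M N' β))
      →ₗ[milnorRing A B B'] N' :=
  TensorProduct.lift
    (LinearMap.mk₂ (milnorRing A B B')
      (fun b p => b • (p : M × N').2)
      (fun b₁ b₂ p => add_smul b₁ b₂ _)
      (fun c b p => by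
        show (milnorSnd A B B' c * b) • (p : M × N').2
          = milnorSnd A B B' c • (b • (p : M × N').2)
        rw [mul_smul])
      (fun b p q => by
        show b • ((p : M × N').2 + (q : M × N').2)
          = b • (p : M × N').2 + b • (q : M × N').2
        rw [smul_add])
      (fun c b p => by
        show b • (milnorSnd A B B' c • (p : M × N').2)
          = milnorSnd A B B' c • (b • (p : M × N').2)
        rw [← mul_smul, mul_comm, mul_smul]))

/-! ### Flatness criterion for a nilpotent ideal -/

section Abstract

variable {R S P : Type*} [CommRing R] [CommRing S] [Algebra R S] [AddCommGroup P] [Module R P]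

/-- If the base change `S ⊗[R] P` is flat over `S`, then `- ⊗[R] P` preserves injectivity of
`S`-linear maps, because `X ⊗[R] P ≃ X ⊗[S] (S ⊗[R] P)` for every `S`-module `X`. -/
lemma rTensor_restrictScalars_injective_of_flat [Module.Flat S (S ⊗[R] P)]
    {X Y : Type*} [AddCommGroup X] [AddCommGroup Y] [Module R X] [Module S X] [IsScalarTower R S X]
    [Module R Y] [Module S Y] [IsScalarTower R S Y] (f : X →ₗ[S] Y) (hf : Function.Injective f) :
    Function.Injective ((f.restrictScalars R).rTensor P) := by
  have h1 := Module.Flat.rTensor_preserves_injective_linearMap (M := S ⊗[R] P) f hf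
  let eX := TensorProduct.AlgebraTensorModule.cancelBaseChange R S S X P
  let eY := TensorProduct.AlgebraTensorModule.cancelBaseChange R S S Y P
  have h2 : ∀ t, eY.symm ((f.restrictScalars R).rTensor P t) = f.rTensor (S ⊗[R] P) (eX.symm t) := by
    intro t
    induction t with
    | zero => simp
    | add a b ha hb => simp only [map_add, ha, hb]
    | tmul x p => simp [eX, eY]
  have h3 : Function.Injective (fun t => eY.symm ((f.restrictScalars R).rTensor P t)) := by
    simp only [h2]
    exact h1.comp eX.symm.injective
  exact Function.Injective.of_comp h3

/-- If `R → S` maps the ideal `I` bijectively onto an ideal `J` of `S`, then `I ⊗ P → R ⊗ P` is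
injective, because its composite with `R ⊗ P → S ⊗ P` is `J ⊗ P → S ⊗ P`. -/
lemma rTensor_ideal_injective_of_flat [Module.Flat S (S ⊗[R] P)] (I : Ideal R) (J : Ideal S)
    (hIJ : ∀ s : S, s ∈ J → ∃ r ∈ I, algebraMap R S r = s)
    (hI : ∀ r ∈ I, algebraMap R S r ∈ J) (hinj : ∀ r ∈ I, algebraMap R S r = 0 → r = 0) :
    Function.Injective (I.subtype.rTensor P) := by
  let e : I →ₗ[R] J := ((Algebra.linearMap R S).comp I.subtype).codRestrict
    (J.restrictScalars R) (fun r => hI r r.2)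
  have he : Function.Bijective e := by
    constructor
    · rw [injective_iff_map_eq_zero]
      intro a ha
      exact Subtype.ext (hinj a a.2 (congrArg Subtype.val ha))
    · rintro ⟨s, hs⟩
      obtain ⟨r, hr, rfl⟩ := hIJ s hs
      exact ⟨⟨r, hr⟩, rfl⟩
  have h1 := rTensor_restrictScalars_injective_of_flat (R := R) (P := P) J.subtype
    J.injective_subtype
  have h2 : Function.Injective (e.rTensor P) :=
    ((LinearEquiv.ofBijective e he).rTensor P).injective
  have h3 := h1.comp h2
  rw [← LinearMap.coe_comp, ← LinearMap.rTensor_comp] at h3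
  have h4 : (J.subtype.restrictScalars R).comp e = (Algebra.linearMap R S).comp I.subtype := rfl
  rw [h4, LinearMap.rTensor_comp, LinearMap.coe_comp] at h3
  exact Function.Injective.of_comp h3

lemma rTensor_finsupp_injective {ι : Type*} {X Y : Type*} [AddCommGroup X] [AddCommGroup Y]
    [Module R X] [Module R Y] (f : X →ₗ[R] Y) (hf : Function.Injective (f.rTensor P)) :
    Function.Injective ((Finsupp.mapRange.linearMap (α := ι) f).rTensor P) := by
  classical
  have h : ∀ t, TensorProduct.finsuppLeft R R Y P ι ((Finsupp.mapRange.linearMap f).rTensor P t) =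
      Finsupp.mapRange.linearMap (f.rTensor P) (TensorProduct.finsuppLeft R R X P ι t) := by
    intro t
    induction t with
    | zero => simp
    | add a b ha hb => simp only [map_add, ha, hb]
    | tmul x p =>
      ext i
      simp [TensorProduct.finsuppLeft_apply_tmul_apply]
  have h3 : Function.Injective (fun t => TensorProduct.finsuppLeft R R Y P ι
      ((Finsupp.mapRange.linearMap f).rTensor P t)) := by
    simp only [h]
    exact (Finsupp.mapRange_injective _ (map_zero _) hf).comp (LinearEquiv.injective _)
  exact Function.Injective.of_comp h3

/-- The four lemma after tensoring: `K → Y → Y' → 0` is exact, and `Y → F` becomes injective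
because `K → F` and `Y' → G` do. -/
lemma rTensor_injective_of_exact {K Y Y' F G : Type*} [AddCommGroup K] [AddCommGroup Y]
    [AddCommGroup Y'] [AddCommGroup F] [AddCommGroup G] [Module R K] [Module R Y] [Module R Y']
    [Module R F] [Module R G] (k : K →ₗ[R] Y) (q : Y →ₗ[R] Y') (hkq : Function.Exact k q)
    (hq : Function.Surjective q) (j : Y →ₗ[R] F) (j' : Y' →ₗ[R] G) (π : F →ₗ[R] G)
    (hcomm : j'.comp q = π.comp j) (hj' : Function.Injective (j'.rTensor P))
    (hjk : Function.Injective ((j.comp k).rTensor P)) : Function.Injective (j.rTensor P) := by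
  rw [injective_iff_map_eq_zero]
  intro y hy
  have h1 : j'.rTensor P (q.rTensor P y) = 0 := by
    rw [← LinearMap.rTensor_comp_apply, hcomm, LinearMap.rTensor_comp_apply, hy, map_zero]
  have h2 := (injective_iff_map_eq_zero _).1 hj' _ h1
  obtain ⟨x, rfl⟩ := (rTensor_exact P hkq hq y).1 h2
  rw [← LinearMap.rTensor_comp_apply] at hy
  rw [(injective_iff_map_eq_zero _).1 hjk _ hy, map_zero]

/-- Injectivity of `W ⊗ P → F ⊗ P` descends along a surjection `p : F → Z` to the induced map
`Y ⊗ P → Z ⊗ P`, where `Y` is the image of `W`, provided `W` contains the kernel of `p`. -/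
lemma rTensor_injective_of_surjective {K W F Y Z : Type*} [AddCommGroup K] [AddCommGroup W]
    [AddCommGroup F] [AddCommGroup Y] [AddCommGroup Z] [Module R K] [Module R W] [Module R F]
    [Module R Y] [Module R Z] (c : K →ₗ[R] W) (w : W →ₗ[R] F) (p : F →ₗ[R] Z)
    (hex : Function.Exact (w.comp c) p) (hp : Function.Surjective p) (q : W →ₗ[R] Y)
    (hq : Function.Surjective q) (f : Y →ₗ[R] Z) (hfq : f.comp q = p.comp w)
    (hqc : q.comp c = 0) (hw : Function.Injective (w.rTensor P)) :
    Function.Injective (f.rTensor P) := by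
  rw [injective_iff_map_eq_zero]
  intro y hy
  obtain ⟨t, rfl⟩ := LinearMap.rTensor_surjective P hq y
  rw [← LinearMap.rTensor_comp_apply, hfq, LinearMap.rTensor_comp_apply] at hy
  obtain ⟨x, hx⟩ := (rTensor_exact P hex hp _).1 hy
  rw [LinearMap.rTensor_comp_apply] at hx
  rw [← hw hx, ← LinearMap.rTensor_comp_apply, hqc, LinearMap.rTensor_zero, LinearMap.zero_apply]

/-- Let `G` be an `S`-module. An `R`-submodule `Y` of `F` containing the kernel of `π : F → G` still
embeds into `F` after tensoring with `P` as soon as that kernel, parametrized by `i : K → F`, does. -/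
lemma rTensor_submodule_injective [Module.Flat S (S ⊗[R] P)]
    (hs : Function.Surjective (algebraMap R S))
    {K F G : Type*} [AddCommGroup K] [AddCommGroup F] [AddCommGroup G] [Module R K] [Module R F]
    [Module R G] [Module S G] [IsScalarTower R S G] (i : K →ₗ[R] F) (π : F →ₗ[R] G)
    (hex : Function.Exact i π) (hi : Function.Injective (i.rTensor P))
    (Y : Submodule R F) (hY : LinearMap.ker π ≤ Y) :
    Function.Injective (Y.subtype.rTensor P) := by
  -- Surjectivity of `R → S` makes the image of `Y` in `G` an `S`-submodule.
  let Y' : Submodule S G :=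
    { carrier := {z | ∃ y ∈ Y, π y = z}
      add_mem' := by
        rintro _ _ ⟨a, ha, rfl⟩ ⟨b, hb, rfl⟩
        exact ⟨a + b, Y.add_mem ha hb, map_add _ _ _⟩
      zero_mem' := ⟨0, Y.zero_mem, map_zero _⟩
      smul_mem' := by
        rintro c _ ⟨a, ha, rfl⟩
        obtain ⟨r, rfl⟩ := hs c
        exact ⟨r • a, Y.smul_mem r ha, by rw [map_smul, algebraMap_smul]⟩ }
  let k : K →ₗ[R] Y := i.codRestrict Y (fun x => hY (hex.apply_apply_eq_zero x))
  let q : Y →ₗ[R] Y' := (π.comp Y.subtype).codRestrict (Y'.restrictScalars R)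
    (fun y => ⟨y, y.2, rfl⟩)
  have hq : Function.Surjective q := by
    rintro ⟨_, y, hy, rfl⟩
    exact ⟨⟨y, hy⟩, rfl⟩
  have hkq : Function.Exact k q := by
    intro y
    constructor
    · intro h
      obtain ⟨x, hx⟩ := (hex y).1 (congrArg Subtype.val h)
      exact ⟨x, Subtype.ext hx⟩
    · rintro ⟨x, rfl⟩
      exact Subtype.ext (hex.apply_apply_eq_zero x)
  exact rTensor_injective_of_exact (Y := Y) (Y' := Y') k q hkq hq Y.subtype
    (Y'.subtype.restrictScalars R) π rfl
    (rTensor_restrictScalars_injective_of_flat Y'.subtype Y'.injective_subtype) hi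

lemma exact_finsupp_ker (ι : Type*) :
    Function.Exact (Finsupp.mapRange.linearMap (α := ι) (RingHom.ker (algebraMap R S)).subtype)
      (Finsupp.mapRange.linearMap (α := ι) (Algebra.linearMap R S)) := by
  intro y
  constructor
  · intro h
    have h0 : ∀ i, y i ∈ RingHom.ker (algebraMap R S) := fun i => by
      simpa using DFunLike.congr_fun h i
    refine ⟨Finsupp.onFinset y.support (fun i => ⟨y i, h0 i⟩) ?_, ?_⟩
    · intro i hi
      simpa [Subtype.ext_iff] using hi
    · ext i
      simp
  · rintro ⟨x, rfl⟩
    ext i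
    simpa using (RingHom.mem_ker (f := algebraMap R S)).1 (x i).2

/-- Injectivity after tensoring for `f : Y → Z` can be checked on the preimage of `Y` under a
surjection `p : F → Z`. -/
lemma rTensor_injective_of_presentation {F Y Z : Type*} [AddCommGroup F] [AddCommGroup Y]
    [AddCommGroup Z] [Module R F] [Module R Y] [Module R Z] (p : F →ₗ[R] Z)
    (hp : Function.Surjective p) (f : Y →ₗ[R] Z) (hf : Function.Injective f)
    (hW : Function.Injective (((LinearMap.range f).comap p).subtype.rTensor P)) :
    Function.Injective (f.rTensor P) := by
  let W : Submodule R F := (LinearMap.range f).comap p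
  let e := LinearEquiv.ofInjective f hf
  let q : W →ₗ[R] Y := e.symm.toLinearMap.comp
    ((p.comp W.subtype).codRestrict (LinearMap.range f) (fun w => w.2))
  have hfq : f.comp q = p.comp W.subtype := by
    ext1 w
    exact congrArg Subtype.val (e.apply_symm_apply _)
  have hfq' : ∀ w, f (q w) = p w := fun w => LinearMap.congr_fun hfq w
  have hq : Function.Surjective q := by
    intro y
    obtain ⟨x, hx⟩ := hp (f y)
    refine ⟨⟨x, y, hx.symm⟩, hf ?_⟩
    rw [hfq', hx]
  have hKW : LinearMap.ker p ≤ W := fun x hx => by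
    change p x ∈ LinearMap.range f
    rw [LinearMap.mem_ker.1 hx]
    exact Submodule.zero_mem _
  have hqk : q.comp (Submodule.inclusion hKW) = 0 := by
    ext1 x
    apply hf
    rw [LinearMap.comp_apply, hfq']
    simp
  exact rTensor_injective_of_surjective (K := LinearMap.ker p) (W := W)
    (Submodule.inclusion hKW) W.subtype p (LinearMap.exact_subtype_ker_map p) hp q hq f hfq hqk hW

/-- An inclusion `Y → Z` whose cokernel is killed by `ker (R → S)` stays injective after tensoring
with `P`. This is reduced to a free module `Z →₀ R` mapping onto `Z`. -/
lemma rTensor_injective_of_smul_mem_range [Module.Flat S (S ⊗[R] P)]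
    (hs : Function.Surjective (algebraMap R S))
    (hI : Function.Injective ((RingHom.ker (algebraMap R S)).subtype.rTensor P))
    {Y Z : Type*} [AddCommGroup Y] [AddCommGroup Z] [Module R Y] [Module R Z]
    (f : Y →ₗ[R] Z) (hf : Function.Injective f)
    (h : ∀ r : R, algebraMap R S r = 0 → ∀ z : Z, r • z ∈ LinearMap.range f) :
    Function.Injective (f.rTensor P) := by
  refine rTensor_injective_of_presentation (Finsupp.linearCombination R (id : Z → Z))
    (fun z => ⟨Finsupp.single z 1, by simp⟩) f hf ?_
  refine rTensor_submodule_injective (S := S) hs _ _ (exact_finsupp_ker (R := R) (S := S) Z)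
    (rTensor_finsupp_injective _ hI) _ fun y hy => ?_
  rw [Submodule.mem_comap, Finsupp.linearCombination_apply]
  refine Submodule.sum_mem _ fun z _ => h _ ?_ _
  simpa using DFunLike.congr_fun (LinearMap.mem_ker.1 hy) z

/-- The local criterion of flatness for a nilpotent ideal, the kernel of a surjection `R → S`.
For an ideal `J` of `R`, each inclusion of the chain `J = J ⊔ I ^ n ≤ ⋯ ≤ J ⊔ I ^ 0 = R` has
cokernel killed by `I`. -/
theorem flat_of_nilpotent_ker [Module.Flat S (S ⊗[R] P)]
    (hs : Function.Surjective (algebraMap R S))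
    (hn : IsNilpotent (RingHom.ker (algebraMap R S)))
    (hI : Function.Injective ((RingHom.ker (algebraMap R S)).subtype.rTensor P)) :
    Module.Flat R P := by
  rw [Module.Flat.iff_rTensor_injective']
  intro J
  set I := RingHom.ker (algebraMap R S) with hIdef
  have key : ∀ k : ℕ, Function.Injective ((J ⊔ I ^ k).subtype.rTensor P) := by
    intro k
    induction k with
    | zero =>
      have : (J ⊔ I ^ 0) = ⊤ := by simp
      rw [this]
      exact (LinearEquiv.rTensor P (Submodule.topEquiv (R := R) (M := R))).injective
    | succ k ih =>
      have hle : J ⊔ I ^ (k + 1) ≤ J ⊔ I ^ k := sup_le_sup_left (Ideal.pow_le_pow_right k.le_succ) _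
      have h1 := rTensor_injective_of_smul_mem_range (P := P) hs hI (Submodule.inclusion hle)
        (Submodule.inclusion_injective hle) (fun r hr z => by
          rw [Submodule.range_inclusion]
          change r * (z : R) ∈ J ⊔ I ^ (k + 1)
          have hmem : r * (z : R) ∈ I * (J ⊔ I ^ k) := Ideal.mul_mem_mul hr z.2
          rw [Ideal.mul_sup, ← pow_succ'] at hmem
          exact (sup_le_sup_right Ideal.mul_le_right _ : I * J ⊔ I ^ (k + 1) ≤ _) hmem)
      have h2 := ih.comp h1
      rwa [← LinearMap.coe_comp, ← LinearMap.rTensor_comp] at h2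
  obtain ⟨n, hn⟩ := hn
  have h := key n
  have hJ : J ⊔ I ^ n = J := by rw [hn]; exact sup_bot_eq J
  rwa [hJ] at h

end Abstract

/-! ### The glued module -/

section Gluing

lemma exists_eq_one_tmul {R S P : Type*} [CommRing R] [CommRing S] [Algebra R S] [AddCommGroup P]
    [Module R P] (hs : Function.Surjective (algebraMap R S)) (t : S ⊗[R] P) :
    ∃ p : P, t = 1 ⊗ₜ p := by
  induction t with
  | zero => exact ⟨0, by simp⟩
  | add a b ha hb =>
    obtain ⟨p, rfl⟩ := ha
    obtain ⟨q, rfl⟩ := hb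
    exact ⟨p + q, by rw [tmul_add]⟩
  | tmul s p =>
    obtain ⟨r, rfl⟩ := hs s
    exact ⟨r • p, by rw [tmul_smul, smul_tmul', Algebra.smul_def, mul_one]⟩

lemma mem_ker_smul_top_of_one_tmul_eq_zero {R S P : Type*} [CommRing R] [CommRing S] [Algebra R S]
    [AddCommGroup P] [Module R P] (hs : Function.Surjective (algebraMap R S)) (p : P)
    (hp : (1 : S) ⊗ₜ[R] p = 0) : p ∈ RingHom.ker (algebraMap R S) • (⊤ : Submodule R P) := by
  have hex : Function.Exact (RingHom.ker (algebraMap R S)).subtype (Algebra.linearMap R S) := by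
    intro r
    simp
  have h : Function.Exact ((RingHom.ker (algebraMap R S)).subtype.rTensor P)
    ((Algebra.linearMap R S).rTensor P) := rTensor_exact P hex hs
  obtain ⟨t, ht⟩ := (h (1 ⊗ₜ p)).1 (by simpa using hp)
  have h2 : ∀ t, TensorProduct.lid R P ((RingHom.ker (algebraMap R S)).subtype.rTensor P t) ∈
      RingHom.ker (algebraMap R S) • (⊤ : Submodule R P) := by
    intro t
    induction t with
    | zero => simp
    | add a b ha hb =>
      rw [map_add, map_add]
      exact Submodule.add_mem _ ha hb
    | tmul i x =>
      simpa using Submodule.smul_mem_smul i.2 (Submodule.mem_top (x := x))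
  have h3 := h2 t
  rw [ht] at h3
  simpa using h3

/-- An element of `T ⊗[R] P` vanishing in `U ⊗[S] Q`, where `Q` is the base change of `P` to `S`,
comes from `ker (T → U) ⊗[R] P`, because `U ⊗[S] Q ≃ U ⊗[R] P`. The comparison map `c` is described
by its values only, so that no `R`-action on `U` enters its type. -/
lemma mem_range_rTensor_ker {R S T U P Q : Type*} [CommRing R] [CommRing S] [CommRing T]
    [CommRing U] [Algebra R S] [Algebra R T] [Algebra R U] [Algebra S U] [Algebra T U]
    [IsScalarTower R S U] [IsScalarTower R T U] [AddCommGroup P] [Module R P] [AddCommGroup Q]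
    [Module S Q] (hTU : Function.Surjective (algebraMap T U)) (u : (S ⊗[R] P) ≃ₗ[S] Q)
    (c : T ⊗[R] P →+ U ⊗[S] Q)
    (hc : ∀ b p, c (b ⊗ₜ p) = algebraMap T U b ⊗ₜ[S] u (1 ⊗ₜ p)) (x : T ⊗[R] P) (hx : c x = 0) :
    ∃ t, ((RingHom.ker (algebraMap T U)).subtype.restrictScalars R).rTensor P t = x := by
  let g : T →ₗ[R] U := (IsScalarTower.toAlgHom R T U).toLinearMap
  have hex : Function.Exact ((RingHom.ker (algebraMap T U)).subtype.restrictScalars R) g := by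
    intro r
    simp [g]
  have h : Function.Exact
      (((RingHom.ker (algebraMap T U)).subtype.restrictScalars R).rTensor P)
      (g.rTensor P) := rTensor_exact P hex hTU
  refine (h x).1 ?_
  let θ := (AlgebraTensorModule.cancelBaseChange R S S U P).symm.trans (u.lTensor U)
  have hθ : ∀ y, θ (g.rTensor P y) = c y := by
    intro y
    induction y with
    | zero => simp
    | add a b ha hb => simp only [map_add, ha, hb]
    | tmul b p => simp [θ, hc, g]
  apply θ.injective
  rw [hθ, hx, map_zero]

/-- The projection `A' → A` as an algebra; its scalar action is the one of
`milnorModuleOfFst`. -/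
@[reducible] noncomputable def milnorAlgebraFst : Algebra (milnorRing A B B') A :=
  { milnorModuleOfFst A B B' A with
    algebraMap := milnorFst A B B'
    commutes' := fun _ _ => mul_comm _ _
    smul_def' := fun _ _ => rfl }

/-- The projection `A' → B'` as an algebra; its scalar action is the one of
`milnorModuleOfSnd`. -/
@[reducible] noncomputable def milnorAlgebraSnd : Algebra (milnorRing A B B') B' :=
  { milnorModuleOfSnd A B B' B' with
    algebraMap := milnorSnd A B B'
    commutes' := fun _ _ => mul_comm _ _
    smul_def' := fun _ _ => rfl }

attribute [local instance] milnorAlgebraFst milnorAlgebraSnd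

variable {A B B' M N'} (β : (B ⊗[A] M) ≃ₗ[B] (B ⊗[B'] N'))

lemma milnorFst_surjective (hg : Function.Surjective (algebraMap B' B)) :
    Function.Surjective (milnorFst A B B') := by
  intro a
  obtain ⟨b, hb⟩ := hg (algebraMap A B a)
  exact ⟨⟨(a, b), hb.symm⟩, rfl⟩

lemma mem_milnorGlued_iff (p : M × N') :
    p ∈ milnorGlued A B B' M N' β ↔ β ((1 : B) ⊗ₜ[A] p.1) = (1 : B) ⊗ₜ[B'] p.2 := Iff.rfl

lemma milnorToM_tmul (a : A) (p : milnorGlued A B B' M N' β) :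
    milnorToM A B B' M N' β (a ⊗ₜ p) = a • (p : M × N').1 := rfl

lemma milnorToN'_tmul (b : B') (p : milnorGlued A B B' M N' β) :
    milnorToN' A B B' M N' β (b ⊗ₜ p) = b • (p : M × N').2 := rfl

lemma milnorToM_smul (a : A) (t : A ⊗[milnorRing A B B'] (milnorGlued A B B' M N' β)) :
    milnorToM A B B' M N' β (a • t) = a • milnorToM A B B' M N' β t := by
  induction t with
  | zero => simp
  | add x y hx hy => simp only [smul_add, map_add, hx, hy]
  | tmul c p => rw [smul_tmul', milnorToM_tmul, milnorToM_tmul, smul_eq_mul, mul_smul]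

lemma milnorToN'_smul (b : B') (t : B' ⊗[milnorRing A B B'] (milnorGlued A B B' M N' β)) :
    milnorToN' A B B' M N' β (b • t) = b • milnorToN' A B B' M N' β t := by
  induction t with
  | zero => simp
  | add x y hx hy => simp only [smul_add, map_add, hx, hy]
  | tmul c p => rw [smul_tmul', milnorToN'_tmul, milnorToN'_tmul, smul_eq_mul, mul_smul]

lemma exists_mem_milnorGlued (hg : Function.Surjective (algebraMap B' B)) (m : M) :
    ∃ n, (m, n) ∈ milnorGlued A B B' M N' β :=
  exists_eq_one_tmul hg (β (1 ⊗ₜ m))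

lemma ker_smul_mem_milnorGlued (n : N')
    (hn : n ∈ RingHom.ker (algebraMap B' B) • (⊤ : Submodule B' N')) :
    (0, n) ∈ milnorGlued A B B' M N' β := by
  rw [mem_milnorGlued_iff]
  simp only [tmul_zero, map_zero]
  refine Submodule.smul_induction_on hn (fun i hi x _ => ?_) (fun x y hx hy => ?_)
  · rw [tmul_smul, smul_tmul', Algebra.smul_def, (RingHom.mem_ker).1 hi, zero_mul, zero_tmul]
  · rw [tmul_add, ← hx, ← hy, add_zero]

/-- The second components of elements of `M'` generate `N'`. -/
lemma span_snd_milnorGlued (hg : Function.Surjective (algebraMap B' B)) :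
    Submodule.span B' {n : N' | ∃ m, (m, n) ∈ milnorGlued A B B' M N' β} = ⊤ := by
  set T := Submodule.span B' {n : N' | ∃ m, (m, n) ∈ milnorGlued A B B' M N' β} with hT
  have key : ∀ s : B ⊗[A] M, ∃ n ∈ T, β s = 1 ⊗ₜ n := by
    intro s
    induction s with
    | zero => exact ⟨0, T.zero_mem, by simp⟩
    | add x y hx hy =>
      obtain ⟨n, hn, h1⟩ := hx
      obtain ⟨n', hn', h2⟩ := hy
      exact ⟨n + n', T.add_mem hn hn', by rw [map_add, h1, h2, tmul_add]⟩
    | tmul b m =>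
      obtain ⟨b', rfl⟩ := hg b
      obtain ⟨n, hn⟩ := exists_mem_milnorGlued β hg m
      refine ⟨b' • n, T.smul_mem _ (Submodule.subset_span ⟨m, hn⟩), ?_⟩
      have h1 : algebraMap B' B b' ⊗ₜ[A] m = algebraMap B' B b' • ((1 : B) ⊗ₜ[A] m) := by
        rw [smul_tmul', smul_eq_mul, mul_one]
      rw [h1, map_smul, (mem_milnorGlued_iff β _).1 hn, tmul_smul, algebraMap_smul]
  rw [eq_top_iff]
  intro n _
  obtain ⟨n₀, hn₀, h⟩ := key (β.symm (1 ⊗ₜ n))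
  rw [LinearEquiv.apply_symm_apply] at h
  have h2 : n - n₀ ∈ T := by
    refine Submodule.subset_span ⟨0, ker_smul_mem_milnorGlued β _ ?_⟩
    refine mem_ker_smul_top_of_one_tmul_eq_zero hg _ ?_
    rw [tmul_sub, h, sub_self]
  simpa using T.add_mem h2 hn₀

/-- The kernel `{0} × J N'` of `M' → M`, with `J = ker g`, is contained in `I M'`, where `I` is the
kernel of `A' → A`: the second components of `M'` generate `N'`. -/
lemma mem_ker_fst_smul (hg : Function.Surjective (algebraMap B' B)) (n : N')
    (hn : n ∈ RingHom.ker (algebraMap B' B) • (⊤ : Submodule B' N')) :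
    ∃ p ∈ RingHom.ker (milnorFst A B B') •
      (⊤ : Submodule (milnorRing A B B') (milnorGlued A B B' M N' β)), (p : M × N') = (0, n) := by
  refine Submodule.smul_induction_on hn (fun i hi x _ => ?_) (fun x y hx hy => ?_)
  · have hx : x ∈ Submodule.span B' {n : N' | ∃ m, (m, n) ∈ milnorGlued A B B' M N' β} := by
      rw [span_snd_milnorGlued β hg]
      trivial
    revert i
    refine Submodule.span_induction ?_ ?_ ?_ ?_ hx
    · rintro x ⟨m, hm⟩ i hi
      let r : milnorRing A B B' := ⟨(0, i), by
        change algebraMap A B 0 = algebraMap B' B i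
        rw [map_zero, (RingHom.mem_ker).1 hi]⟩
      refine ⟨r • ⟨(m, x), hm⟩, Submodule.smul_mem_smul rfl trivial, ?_⟩
      change ((0 : A) • m, i • x) = _
      rw [zero_smul]
    · intro i _
      exact ⟨0, Submodule.zero_mem _, by rw [smul_zero]; rfl⟩
    · intro x y _ _ hx hy i hi
      obtain ⟨p, hp, h1⟩ := hx i hi
      obtain ⟨q, hq, h2⟩ := hy i hi
      exact ⟨p + q, Submodule.add_mem _ hp hq, by
        rw [Submodule.coe_add, h1, h2, Prod.mk_add_mk, add_zero, smul_add]⟩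
    · intro b x _ hx i hi
      obtain ⟨p, hp, h1⟩ := hx (i * b) (Ideal.mul_mem_right _ _ hi)
      exact ⟨p, hp, by rw [h1, mul_smul]⟩
  · obtain ⟨p, hp, h1⟩ := hx
    obtain ⟨q, hq, h2⟩ := hy
    exact ⟨p + q, Submodule.add_mem _ hp hq, by
      rw [Submodule.coe_add, h1, h2, Prod.mk_add_mk, add_zero]⟩

lemma milnorToM_bijective (hg : Function.Surjective (algebraMap B' B)) :
    Function.Bijective (milnorToM A B B' M N' β) := by
  constructor
  · rw [injective_iff_map_eq_zero]
    intro t ht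
    obtain ⟨p, rfl⟩ := exists_eq_one_tmul (R := milnorRing A B B') (milnorFst_surjective hg) t
    have hp1 : (p : M × N').1 = 0 := by
      simpa [milnorToM_tmul] using ht
    have hp2 : (1 : B) ⊗ₜ[B'] (p : M × N').2 = 0 := by
      rw [← (mem_milnorGlued_iff β _).1 p.2, hp1, tmul_zero, map_zero]
    obtain ⟨q, hq, h⟩ := mem_ker_fst_smul β hg _ (mem_ker_smul_top_of_one_tmul_eq_zero hg _ hp2)
    have hqp : q = p := Subtype.ext (h.trans (Prod.ext hp1.symm rfl))
    rw [← hqp]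
    refine Submodule.smul_induction_on hq (fun r hr x _ => ?_) (fun x y hx hy => ?_)
    · have h0 : r • (1 : A) = 0 := by
        change milnorFst A B B' r • (1 : A) = 0
        rw [(RingHom.mem_ker).1 hr, zero_smul]
      rw [tmul_smul, smul_tmul', h0, zero_tmul]
    · rw [tmul_add, hx, hy, add_zero]
  · intro m
    obtain ⟨n, hn⟩ := exists_mem_milnorGlued β hg m
    exact ⟨1 ⊗ₜ ⟨(m, n), hn⟩, by rw [milnorToM_tmul, one_smul]⟩

/-- The isomorphism `A ⊗[A'] M' ≃ M`, as an `A`-linear map. -/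
noncomputable def milnorEquivM (hg : Function.Surjective (algebraMap B' B)) :
    (A ⊗[milnorRing A B B'] (milnorGlued A B B' M N' β)) ≃ₗ[A] M :=
  LinearEquiv.ofBijective
    { toFun := milnorToM A B B' M N' β
      map_add' := map_add _
      map_smul' := milnorToM_smul β } (milnorToM_bijective β hg)

/-- The image of `ker g ⊗[A'] M'` in `B' ⊗[A'] M'` consists of elements `1 ⊗ y` with `y` in the
kernel of `M' → M`: for `j ∈ ker g`, the pair `(0, j)` is in `A'`, so `j ⊗ p = 1 ⊗ (0, j) • p`. -/
lemma exists_rTensor_ker_eq (t : RingHom.ker (algebraMap B' B) ⊗[milnorRing A B B']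
      (milnorGlued A B B' M N' β)) :
    ∃ y : milnorGlued A B B' M N' β, (y : M × N').1 = 0 ∧
      ((RingHom.ker (algebraMap B' B)).subtype.restrictScalars (milnorRing A B B')).rTensor
        (milnorGlued A B B' M N' β) t = 1 ⊗ₜ y := by
  induction t with
  | zero => exact ⟨0, rfl, by simp⟩
  | add a b ha hb =>
    obtain ⟨y, hy, h1⟩ := ha
    obtain ⟨z, hz, h2⟩ := hb
    refine ⟨y + z, ?_, by rw [map_add, h1, h2, tmul_add]⟩
    rw [Submodule.coe_add, Prod.fst_add, hy, hz, add_zero]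
  | tmul i p =>
    let r : milnorRing A B B' := ⟨(0, i), by
      change algebraMap A B 0 = algebraMap B' B i
      rw [map_zero, (RingHom.mem_ker).1 i.2]⟩
    refine ⟨r • p, zero_smul A _, ?_⟩
    have hr : r • (1 : B') = i := mul_one (i : B')
    rw [tmul_smul, smul_tmul', hr]
    rfl

lemma milnorToN'_bijective (hg : Function.Surjective (algebraMap B' B)) :
    Function.Bijective (milnorToN' A B B' M N' β) := by
  constructor
  · rw [injective_iff_map_eq_zero]
    intro x hx
    -- `B` has two equal `A'`-actions, through `A` and through `B'`; the first one is fixed here.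
    let _ : Algebra (milnorRing A B B') B :=
      ((algebraMap A B).comp (milnorFst A B B')).toAlgebra
    have : IsScalarTower (milnorRing A B B') A B := IsScalarTower.of_algebraMap_eq fun r => rfl
    have : IsScalarTower (milnorRing A B B') B' B := IsScalarTower.of_algebraMap_eq fun r => r.2
    let c : B' ⊗[milnorRing A B B'] (milnorGlued A B B' M N' β) →+ B ⊗[A] M :=
      (β.symm : (B ⊗[B'] N') →+ (B ⊗[A] M)).comp
        (((TensorProduct.mk B' B N' 1 : N' →ₗ[B'] B ⊗[B'] N') : N' →+ B ⊗[B'] N').comp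
          (milnorToN' A B B' M N' β : _ →+ N'))
    have hc : ∀ b p, c (b ⊗ₜ p) = algebraMap B' B b ⊗ₜ[A] milnorEquivM β hg (1 ⊗ₜ p) := by
      intro b p
      change β.symm (1 ⊗ₜ (b • (p : M × N').2)) =
        algebraMap B' B b ⊗ₜ[A] ((1 : A) • (p : M × N').1)
      rw [LinearEquiv.symm_apply_eq, one_smul]
      have h1 : algebraMap B' B b ⊗ₜ[A] (p : M × N').1 =
          algebraMap B' B b • ((1 : B) ⊗ₜ[A] (p : M × N').1) := by
        rw [smul_tmul', smul_eq_mul, mul_one]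
      rw [h1, map_smul, (mem_milnorGlued_iff β _).1 p.2, tmul_smul, algebraMap_smul]
    have hcx : c x = 0 := by
      change β.symm (1 ⊗ₜ milnorToN' A B B' M N' β x) = 0
      rw [hx, tmul_zero, map_zero]
    obtain ⟨t, rfl⟩ := mem_range_rTensor_ker hg (milnorEquivM β hg) c hc x hcx
    obtain ⟨y, hy, h⟩ := exists_rTensor_ker_eq β t
    rw [h] at hx ⊢
    rw [milnorToN'_tmul, one_smul] at hx
    have : y = 0 := Subtype.ext (Prod.ext hy hx)
    rw [this, tmul_zero]
  · intro n
    have hn : n ∈ Submodule.span B' {n : N' | ∃ m, (m, n) ∈ milnorGlued A B B' M N' β} := by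
      rw [span_snd_milnorGlued β hg]
      trivial
    refine Submodule.span_induction ?_ ?_ ?_ ?_ hn
    · rintro x ⟨m, hm⟩
      exact ⟨1 ⊗ₜ ⟨(m, x), hm⟩, by rw [milnorToN'_tmul, one_smul]⟩
    · exact ⟨0, map_zero _⟩
    · rintro _ _ _ _ ⟨a, rfl⟩ ⟨b, rfl⟩
      exact ⟨a + b, map_add _ _ _⟩
    · rintro b _ _ ⟨a, rfl⟩
      exact ⟨b • a, milnorToN'_smul β b a⟩

/-- The isomorphism `B' ⊗[A'] M' ≃ N'`, as a `B'`-linear map. -/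
noncomputable def milnorEquivN' (hg : Function.Surjective (algebraMap B' B)) :
    (B' ⊗[milnorRing A B B'] (milnorGlued A B B' M N' β)) ≃ₗ[B'] N' :=
  LinearEquiv.ofBijective
    { toFun := milnorToN' A B B' M N' β
      map_add' := map_add _
      map_smul' := milnorToN'_smul β } (milnorToN'_bijective β hg)

lemma isNilpotent_ker_milnorFst (hker : IsNilpotent (RingHom.ker (algebraMap B' B))) :
    IsNilpotent (RingHom.ker (milnorFst A B B')) := by
  obtain ⟨n, hn⟩ := hker
  -- The extra factor makes every element of the power have first component zero, even if `n = 0`.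
  refine ⟨n + 1, ?_⟩
  rw [Ideal.zero_eq_bot, eq_bot_iff]
  intro r hr
  have h1 : (r : A × B').1 = 0 := Ideal.pow_le_self n.succ_ne_zero hr
  have hle : (RingHom.ker (milnorFst A B B')).map (milnorSnd A B B') ≤
      RingHom.ker (algebraMap B' B) := by
    rw [Ideal.map_le_iff_le_comap]
    intro s hs
    have hs1 : (s : A × B').1 = 0 := hs
    have hs2 : algebraMap A B (s : A × B').1 = algebraMap B' B (s : A × B').2 := s.2
    rw [hs1, map_zero] at hs2
    exact hs2.symm
  have h2 : (r : A × B').2 ∈ RingHom.ker (algebraMap B' B) ^ (n + 1) := by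
    refine Ideal.pow_right_mono hle _ ?_
    rw [← Ideal.map_pow]
    exact Ideal.mem_map_of_mem (milnorSnd A B B') hr
  rw [pow_succ, hn, zero_mul] at h2
  exact Subtype.ext (Prod.ext h1 h2)

lemma milnorGlued_flat (hg : Function.Surjective (algebraMap B' B))
    (hker : IsNilpotent (RingHom.ker (algebraMap B' B))) [Module.Flat A M] [Module.Flat B' N'] :
    Module.Flat (milnorRing A B B') (milnorGlued A B B' M N' β) := by
  have : Module.Flat A (A ⊗[milnorRing A B B'] (milnorGlued A B B' M N' β)) :=
    Module.Flat.of_linearEquiv (milnorEquivM β hg)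
  have : Module.Flat B' (B' ⊗[milnorRing A B B'] (milnorGlued A B B' M N' β)) :=
    Module.Flat.of_linearEquiv (milnorEquivN' β hg)
  refine flat_of_nilpotent_ker (S := A) (milnorFst_surjective hg)
    (isNilpotent_ker_milnorFst hker) ?_
  refine rTensor_ideal_injective_of_flat (S := B') _ (RingHom.ker (algebraMap B' B)) ?_ ?_ ?_
  · intro b hb
    exact ⟨⟨(0, b), by
      change algebraMap A B 0 = algebraMap B' B b
      rw [map_zero, (RingHom.mem_ker).1 hb]⟩, rfl, rfl⟩
  · intro s hs
    have hs1 : (s : A × B').1 = 0 := hs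
    have hs2 : algebraMap A B (s : A × B').1 = algebraMap B' B (s : A × B').2 := s.2
    rw [hs1, map_zero] at hs2
    exact hs2.symm
  · intro s hs hs'
    exact Subtype.ext (Prod.ext hs hs')

end Gluing

/-- **Schlessinger–Milnor–Ferrand gluing.** Let `g : B' → B` be
surjective with nilpotent kernel, `f : A → B` arbitrary, `A' = A ×_B B'`.  Given a
flat `A`-module `M`, a flat `B'`-module `N'`, and a `B`-isomorphism
`β : B ⊗[A] M ≅ B ⊗[B'] N'`, the glued `A'`-module
`M' = {(m, n') : β(1 ⊗ m) = 1 ⊗ n'}` is flat, and the natural maps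
`A ⊗[A'] M' → M` and `B' ⊗[A'] M' → N'` are isomorphisms. -/
theorem milnor_gluing_flat
    (hg : Function.Surjective (algebraMap B' B))
    (hker : IsNilpotent (RingHom.ker (algebraMap B' B)))
    [Module.Flat A M] [Module.Flat B' N']
    (β : (B ⊗[A] M) ≃ₗ[B] (B ⊗[B'] N')) :
    Module.Flat (milnorRing A B B') (milnorGlued A B B' M N' β) ∧
      Function.Bijective (milnorToM A B B' M N' β) ∧
      Function.Bijective (milnorToN' A B B' M N' β) := by
  exact ⟨milnorGlued_flat β hg hker, milnorToM_bijective β hg, milnorToN'_bijective β hg⟩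
end

section
/- Let g : B' → B be a surjective homomorphism of commutative rings whose kernel is a nilpotent ideal, and let f : A → B be an arbitrary ring homomorphism. Let A' = A ×_B B' be the fiber product ring {(a, b') ∈ A × B' : f(a) = g(b')}, with projections p : A' → A and q : A' → B'. Then the induced commutative square of affine schemes, with maps Spec(f) : Spec B → Spec A, Spec(g) : Spec B → Spec B', Spec(p) : Spec A → Spec A', and Spec(q) : Spec B' → Spec A', is a pushout (cocartesian) square in the category of schemes. -/
/-!
Write `X = Spec A`, `Y = Spec B'`, `Z = Spec B`, `P = Spec A'`. Since `g` is surjective with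
nilpotent kernel, so is the projection `p : A' → A`; hence `Spec p : X → P` is a homeomorphism and
`Spec g : Z → Y` is surjective. Moreover localization commutes with fiber products
(`fiberProduct_away_bijective`), so that over each basic open of `P` the sections of the four
structure sheaves form a cartesian square of rings.

These facts give the universal property (`isPushout_of_isBasis`). A morphism `P → T` is determined
by its restrictions to `X` and `Y`: on points because `X → P` is surjective, on sections because
`Γ(P, W) → Γ(X, W) × Γ(Y, W)` is injective; the same applies to every open subscheme of `P`.
Conversely, given compatible `X → T` and `Y → T`, every point of `P` has a basic open neighbourhood
`W` whose preimage in `X`, and then also in `Y`, lands in one affine open `V` of `T`. There the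
morphisms are ring maps out of `Γ(T, V)`, which lift to `Γ(P, W)`. The resulting
morphisms `W → T` agree on overlaps by uniqueness, so they glue.
-/

open CategoryTheory AlgebraicGeometry

universe u

variable {A B B' : Type u} [CommRing A] [CommRing B] [CommRing B']

/-- The fiber product ring `A ×_B B' = {(a, b') | f a = g b'}` as a subring of
`A × B'`. -/
def fiberProductSubring (f : A →+* B) (g : B' →+* B) : Subring (A × B') where
  carrier := {p | f p.1 = g p.2}
  mul_mem' := fun {p q} hp hq => by
    simp only [Set.mem_setOf_eq, Prod.fst_mul, Prod.snd_mul, map_mul] at *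
    rw [hp, hq]
  one_mem' := by simp
  add_mem' := fun {p q} hp hq => by
    simp only [Set.mem_setOf_eq, Prod.fst_add, Prod.snd_add, map_add] at *
    rw [hp, hq]
  zero_mem' := by simp
  neg_mem' := fun {p} hp => by
    simp only [Set.mem_setOf_eq, Prod.fst_neg, Prod.snd_neg, map_neg] at *
    rw [hp]

open TopologicalSpace Opposite

/-! ### Localization of fiber products -/

/-- Localization away from an element `s` of `A' = A ×_B B'` commutes with the fiber product: the
localized square is again cartesian. -/
theorem fiberProduct_away_bijective {A' A B B' : Type*} [CommRing A'] [CommRing A] [CommRing B]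
    [CommRing B'] (p : A' →+* A) (q : A' →+* B') (f : A →+* B) (g : B' →+* B)
    (comm : ∀ x, f (p x) = g (q x)) (hinj : ∀ x, p x = 0 → q x = 0 → x = 0)
    (hsurj : ∀ a b, f a = g b → ∃ x, p x = a ∧ q x = b)
    (s : A') {L' LA LB LB' : Type*} [CommRing L'] [CommRing LA]
    [CommRing LB] [CommRing LB'] [Algebra A' L'] [Algebra A LA]
    [Algebra B LB] [Algebra B' LB'] [IsLocalization.Away s L'] [IsLocalization.Away (p s) LA]
    [IsLocalization.Away (f (p s)) LB] [IsLocalization.Away (q s) LB']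
    (P : L' →+* LA) (Q : L' →+* LB') (F : LA →+* LB) (G : LB' →+* LB)
    (hP : ∀ x : A', P (algebraMap _ _ x) = algebraMap _ _ (p x))
    (hQ : ∀ x : A', Q (algebraMap _ _ x) = algebraMap _ _ (q x))
    (hF : ∀ x, F (algebraMap _ _ x) = algebraMap _ _ (f x))
    (hG : ∀ x, G (algebraMap _ _ x) = algebraMap _ _ (g x)) :
    (∀ c d : L', P c = P d → Q c = Q d → c = d) ∧
      ∀ a b, F a = G b → ∃ c, P c = a ∧ Q c = b := by
  have hs : f (p s) = g (q s) := comm s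
  have uL' : IsUnit (algebraMap _ L' s) := IsLocalization.Away.algebraMap_isUnit s
  have uLA : IsUnit (algebraMap _ LA (p s)) := IsLocalization.Away.algebraMap_isUnit (p s)
  have uLB' : IsUnit (algebraMap _ LB' (q s)) := IsLocalization.Away.algebraMap_isUnit (q s)
  constructor
  · suffices H : ∀ c : L', P c = 0 → Q c = 0 → c = 0 by
      intro c d h1 h2
      rw [← sub_eq_zero]
      exact H _ (by rw [map_sub, h1, sub_self]) (by rw [map_sub, h2, sub_self])
    intro c h1 h2
    obtain ⟨n, x, hx⟩ := IsLocalization.Away.surj s c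
    have h1' : algebraMap A LA (p x) = algebraMap A LA 0 := by
      rw [← hP, ← hx, map_mul, h1, zero_mul, map_zero]
    have h2' : algebraMap B' LB' (q x) = algebraMap B' LB' 0 := by
      rw [← hQ, ← hx, map_mul, h2, zero_mul, map_zero]
    obtain ⟨m, hm⟩ := IsLocalization.Away.exists_of_eq (S := LA) (p s) h1'
    obtain ⟨m', hm'⟩ := IsLocalization.Away.exists_of_eq (S := LB') (q s) h2'
    rw [mul_zero] at hm hm'
    have hz : s ^ (m + m') * x = 0 := by
      apply hinj
      · rw [map_mul, map_pow, pow_add, mul_right_comm, hm, zero_mul]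
      · rw [map_mul, map_pow, pow_add, mul_assoc, hm', mul_zero]
    have h3 : algebraMap _ L' s ^ (m + m') * (c * algebraMap _ L' s ^ n) = 0 := by
      rw [hx, ← map_pow, ← map_mul, hz, map_zero]
    exact ((uL'.pow n).mul_left_eq_zero).1 (((uL'.pow _).mul_right_eq_zero).1 h3)
  · intro a b hab
    obtain ⟨n, a0, ha⟩ := IsLocalization.Away.surj (p s) a
    obtain ⟨m, b0, hb⟩ := IsLocalization.Away.surj (q s) b
    have key : algebraMap B LB (f (p s ^ m * a0)) = algebraMap B LB (g (q s ^ n * b0)) := by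
      have e1 : algebraMap B LB (f a0) = F a * algebraMap B LB (f (p s)) ^ n := by
        rw [← hF, ← ha, map_mul, map_pow, hF]
      have e2 : algebraMap B LB (g b0) = G b * algebraMap B LB (f (p s)) ^ m := by
        rw [← hG, ← hb, map_mul, map_pow, hG, hs]
      simp only [map_mul, map_pow, e1, e2, hab, hs]
      ring
    obtain ⟨k, hk⟩ := IsLocalization.Away.exists_of_eq (S := LB) (f (p s)) key
    -- The numerators agree in `B` only up to a power `k` of the denominator, hence the factor.
    obtain ⟨x, hpx, hqx⟩ := hsurj (p s ^ k * (p s ^ m * a0)) (q s ^ k * (q s ^ n * b0)) (by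
      rw [map_mul, map_mul g, map_pow, map_pow, ← hs, hk])
    obtain ⟨c, hc⟩ : ∃ c, c * algebraMap _ L' s ^ (k + m + n) = algebraMap _ L' x := by
      obtain ⟨v, hv⟩ := (uL'.pow (k + m + n)).exists_left_inv
      exact ⟨algebraMap _ L' x * v, by rw [mul_assoc, hv, mul_one]⟩
    refine ⟨c, (uLA.pow (k + m + n)).mul_left_injective ?_,
      (uLB'.pow (k + m + n)).mul_left_injective ?_⟩
    · have := congrArg P hc
      rw [map_mul, map_pow, hP, hP, hpx] at this
      dsimp only
      rw [this, map_mul, map_mul, map_pow, map_pow, ← ha]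
      ring
    · have := congrArg Q hc
      rw [map_mul, map_pow, hQ, hQ, hqx] at this
      dsimp only
      rw [this, map_mul, map_mul, map_pow, map_pow, ← hb]
      ring

/-! ### Sections over basic opens -/

theorem isLocalization_of_eq_basicOpen {R : CommRingCat.{u}} (s : R) (U : (Spec R).Opens)
    (h : U = PrimeSpectrum.basicOpen s) : IsLocalization.Away s Γ(Spec R, U) := by
  subst h; infer_instance

theorem appLE_algebraMap {R S : CommRingCat.{u}} (φ : R ⟶ S) (U V e) (r : R) :
    (Spec.map φ).appLE U V e (algebraMap R Γ(Spec R, U) r) = algebraMap S Γ(Spec S, V) (φ r) := by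
  have : (Scheme.ΓSpecIso R).inv ≫ (Spec R).presheaf.map (homOfLE le_top).op ≫
      (Spec.map φ).appLE U V e =
      φ ≫ (Scheme.ΓSpecIso S).inv ≫ (Spec S).presheaf.map (homOfLE le_top).op := by
    rw [Scheme.Hom.map_appLE, Scheme.ΓSpecIso_inv_naturality_assoc]
    rfl
  exact congr($this r)

section Geometry

/-! ### Morphisms out of a jointly covering pair -/

variable {X Y Z P T : Scheme.{u}}

/-- Surjectivity of `k` determines a morphism out of `P` on points, and joint injectivity of `k`
and `l` on sections determines it on structure sheaves; no separatedness of `T` is needed. -/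
theorem schemeHom_ext_of_jointly_injective (k : X ⟶ P) (l : Y ⟶ P) [Surjective k]
    (H : ∀ (W : P.Opens) (s t : Γ(P, W)), k.app W s = k.app W t → l.app W s = l.app W t → s = t)
    (φ ψ : P ⟶ T) (h1 : k ≫ φ = k ≫ ψ) (h2 : l ≫ φ = l ≫ ψ) : φ = ψ := by
  have hb : φ.base = ψ.base := by
    ext x
    obtain ⟨x, rfl⟩ := k.surjective x
    exact congr(($h1).base x)
  refine Scheme.Hom.ext hb fun U ↦ ?_
  ext s
  have key {X' : Scheme.{u}} (a : X' ⟶ P) (h : a ≫ φ = a ≫ ψ) :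
      φ.appLE U (ψ ⁻¹ᵁ U) (by simp [hb]) ≫ a.app (ψ ⁻¹ᵁ U) =
        ψ.app U ≫ a.app (ψ ⁻¹ᵁ U) := by
    rw [a.app_eq_appLE, ψ.app_eq_appLE, Scheme.Hom.appLE_comp_appLE, Scheme.Hom.appLE_comp_appLE]
    simp only [h]
  exact H _ _ _ congr($(key k h1) s) congr($(key l h2) s)

/-- Joint injectivity on sections extends from a basis to all opens by the sheaf property. -/
theorem jointly_injective_of_isBasis (k : X ⟶ P) (l : Y ⟶ P) {𝓑 : Set P.Opens}
    (h𝓑 : Opens.IsBasis 𝓑)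
    (H : ∀ W ∈ 𝓑, ∀ s t : Γ(P, W), k.app W s = k.app W t → l.app W s = l.app W t → s = t)
    (W : P.Opens) (s t : Γ(P, W)) (h1 : k.app W s = k.app W t) (h2 : l.app W s = l.app W t) :
    s = t := by
  have hcov : ∀ x : W, ∃ V ∈ 𝓑, x.1 ∈ V ∧ V ≤ W := fun x ↦ Opens.isBasis_iff_nbhd.1 h𝓑 x.2
  choose V hV𝓑 hxV hVW using hcov
  refine P.sheaf.eq_of_locally_eq' V W (fun x ↦ homOfLE (hVW x))
    (fun x hx ↦ Opens.mem_iSup.2 ⟨⟨x, hx⟩, hxV ⟨x, hx⟩⟩) s t fun x ↦ ?_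
  have key {X' : Scheme.{u}} (a : X' ⟶ P) (h : a.app W s = a.app W t) :
      a.app (V x) (P.presheaf.map (homOfLE (hVW x)).op s) =
        a.app (V x) (P.presheaf.map (homOfLE (hVW x)).op t) := by
    have e := a.naturality (homOfLE (hVW x)).op
    have e' (r) := congr($e r)
    simp only [CommRingCat.comp_apply] at e'
    rw [e', e', h]
  exact H _ (hV𝓑 x) _ _ (key k h1) (key l h2)

theorem hom_opens_ext_of_jointly_injective (k : X ⟶ P) (l : Y ⟶ P) [Surjective k]
    (H : ∀ (W : P.Opens) (s t : Γ(P, W)), k.app W s = k.app W t → l.app W s = l.app W t → s = t)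
    (W : P.Opens) (φ ψ : W.toScheme ⟶ T) (h1 : k ∣_ W ≫ φ = k ∣_ W ≫ ψ)
    (h2 : l ∣_ W ≫ φ = l ∣_ W ≫ ψ) : φ = ψ := by
  have : Surjective (k ∣_ W) :=
    MorphismProperty.of_isPullback (isPullback_morphismRestrict k W).flip inferInstance
  refine schemeHom_ext_of_jointly_injective (k ∣_ W) (l ∣_ W) (fun U s t e1 e2 ↦ ?_) φ ψ h1 h2
  have key {X' : Scheme.{u}} (a : X' ⟶ P) (h : (a ∣_ W).app U s = (a ∣_ W).app U t) :
      a.app (W.ι ''ᵁ U) s = a.app (W.ι ''ᵁ U) t := by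
    rw [morphismRestrict_app] at h
    exact (ConcreteCategory.bijective_of_isIso (X'.presheaf.map
      (eqToHom (image_morphismRestrict_preimage a W U)).op)).1 h
  exact H _ s t (key k e1) (key l e2)

/-- The uniqueness statement for open subschemes, phrased through all test schemes over `X` and
`Y` so that it applies directly to the overlaps `pullback U.ι V.ι` of a cover. -/
theorem hom_ext_of_isOpenImmersion (k : X ⟶ P) (l : Y ⟶ P) [Surjective k]
    (H : ∀ (W : P.Opens) (s t : Γ(P, W)), k.app W s = k.app W t → l.app W s = l.app W t → s = t)
    {E : Scheme.{u}} (m : E ⟶ P) [IsOpenImmersion m] (φ ψ : E ⟶ T)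
    (h1 : ∀ (X' : Scheme.{u}) (a : X' ⟶ E) (b : X' ⟶ X), a ≫ m = b ≫ k → a ≫ φ = a ≫ ψ)
    (h2 : ∀ (Y' : Scheme.{u}) (a : Y' ⟶ E) (b : Y' ⟶ Y), a ≫ m = b ≫ l → a ≫ φ = a ≫ ψ) :
    φ = ψ := by
  rw [← cancel_epi m.isoOpensRange.inv]
  apply hom_opens_ext_of_jointly_injective k l H
  · simp only [← Category.assoc]
    exact h1 _ _ (k ⁻¹ᵁ m.opensRange).ι (by simp)
  · simp only [← Category.assoc]
    exact h2 _ _ (l ⁻¹ᵁ m.opensRange).ι (by simp)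

/-- Local existence: over an open `W` whose sections form a cartesian square, morphisms from
`k ⁻¹ᵁ W` and `l ⁻¹ᵁ W` into one affine open `V` of `T` amount to ring maps out of `Γ(T, V)`, which
lift to `Γ(P, W)`. -/
theorem exists_desc_of_le_isAffineOpen {i : Z ⟶ X} {j : Z ⟶ Y} {k : X ⟶ P} {l : Y ⟶ P}
    (comm : i ≫ k = j ≫ l) (W : P.Opens)
    (hinj : ∀ s t : Γ(P, W), k.app W s = k.app W t → l.app W s = l.app W t → s = t)
    (hsurj : ∀ (a : Γ(X, k ⁻¹ᵁ W)) (b : Γ(Y, l ⁻¹ᵁ W)),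
      i.appLE (k ⁻¹ᵁ W) ((i ≫ k) ⁻¹ᵁ W) le_rfl a =
        j.appLE (l ⁻¹ᵁ W) ((i ≫ k) ⁻¹ᵁ W) (by rw [comm]; rfl) b →
      ∃ c, k.app W c = a ∧ l.app W c = b)
    {h1 : X ⟶ T} {h2 : Y ⟶ T} (h : i ≫ h1 = j ≫ h2) {V : T.Opens} (hV : IsAffineOpen V)
    (e1 : k ⁻¹ᵁ W ≤ h1 ⁻¹ᵁ V) (e2 : l ⁻¹ᵁ W ≤ h2 ⁻¹ᵁ V) :
    ∃ c : W.toScheme ⟶ T, k ∣_ W ≫ c = (k ⁻¹ᵁ W).ι ≫ h1 ∧ l ∣_ W ≫ c = (l ⁻¹ᵁ W).ι ≫ h2 := by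
  let F := i.appLE (k ⁻¹ᵁ W) ((i ≫ k) ⁻¹ᵁ W) le_rfl
  let G := j.appLE (l ⁻¹ᵁ W) ((i ≫ k) ⁻¹ᵁ W) (by rw [comm]; rfl)
  have hFG : k.app W ≫ F = l.app W ≫ G := by
    refine (i.comp_appLE k W _ le_rfl).symm.trans (.trans ?_ (j.comp_appLE l W _ _))
    simp only [comm]
  let toFib : Γ(P, W) →+* fiberProductSubring F.hom G.hom :=
    ((k.app W).hom.prod (l.app W).hom).codRestrict _ fun x ↦ congr($hFG x)
  have hbij : Function.Bijective toFib := by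
    refine ⟨fun s t hst ↦ ?_, fun ⟨⟨a, b⟩, hab⟩ ↦ ?_⟩
    · exact hinj s t congr(($hst).1.1) congr(($hst).1.2)
    · obtain ⟨c, rfl, rfl⟩ := hsurj a b hab
      exact ⟨c, rfl⟩
  let e := RingEquiv.ofBijective toFib hbij
  let α := h1.appLE V _ e1
  let β := h2.appLE V _ e2
  have hαβ : α ≫ F = β ≫ G := by
    refine (i.appLE_comp_appLE h1 V _ _ e1 le_rfl).trans
      (.trans ?_ (j.appLE_comp_appLE h2 V _ _ e2 _).symm)
    simp only [h]
  let δ : Γ(T, V) →+* fiberProductSubring F.hom G.hom :=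
    (α.hom.prod β.hom).codRestrict _ fun x ↦ congr($hαβ x)
  let ρ : Γ(T, V) ⟶ Γ(P, W) := CommRingCat.ofHom (e.symm.toRingHom.comp δ)
  have hρ (x) : toFib (ρ x) = δ x := e.apply_symm_apply (δ x)
  have hρ1 : ρ ≫ k.app W = α := by
    ext x
    exact congr(($(hρ x)).1.1)
  have hρ2 : ρ ≫ l.app W = β := by
    ext x
    exact congr(($(hρ x)).1.2)
  refine ⟨W.toSpecΓ ≫ Spec.map ρ ≫ hV.fromSpec, ?_, ?_⟩
  · rw [← Scheme.Opens.toSpecΓ_naturality_assoc, ← Spec.map_comp_assoc, hρ1,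
      Scheme.Opens.toSpecΓ_SpecMap_appLE_assoc, hV.toSpecΓ_fromSpec, Scheme.Hom.resLE_comp_ι]
  · rw [← Scheme.Opens.toSpecΓ_naturality_assoc, ← Spec.map_comp_assoc, hρ2,
      Scheme.Opens.toSpecΓ_SpecMap_appLE_assoc, hV.toSpecΓ_fromSpec, Scheme.Hom.resLE_comp_ι]

/-! ### Gluing -/

/-- A commutative square of schemes is a pushout if `j` is surjective, `k` is a homeomorphism, and
the sections over the members of some basis of `P` form cartesian squares of rings. -/
theorem isPushout_of_isBasis {i : Z ⟶ X} {j : Z ⟶ Y} {k : X ⟶ P} {l : Y ⟶ P}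
    (comm : i ≫ k = j ≫ l) [Surjective j] (hk : IsHomeomorph k) {𝓑 : Set P.Opens}
    (h𝓑 : Opens.IsBasis 𝓑)
    (hinj : ∀ W ∈ 𝓑, ∀ s t : Γ(P, W), k.app W s = k.app W t → l.app W s = l.app W t → s = t)
    (hsurj : ∀ W ∈ 𝓑, ∀ (a : Γ(X, k ⁻¹ᵁ W)) (b : Γ(Y, l ⁻¹ᵁ W)),
      i.appLE (k ⁻¹ᵁ W) ((i ≫ k) ⁻¹ᵁ W) le_rfl a =
        j.appLE (l ⁻¹ᵁ W) ((i ≫ k) ⁻¹ᵁ W) (by rw [comm]; rfl) b →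
      ∃ c, k.app W c = a ∧ l.app W c = b) :
    IsPushout i j k l := by
  have : Surjective k := ⟨hk.surjective⟩
  have hinj' := jointly_injective_of_isBasis k l h𝓑 hinj
  have huniq {T : Scheme.{u}} (φ ψ : P ⟶ T) := schemeHom_ext_of_jointly_injective k l hinj' φ ψ
  suffices hex : ∀ {T : Scheme.{u}} (h1 : X ⟶ T) (h2 : Y ⟶ T), i ≫ h1 = j ≫ h2 →
      ∃ c : P ⟶ T, k ≫ c = h1 ∧ l ≫ c = h2 by
    refine ⟨⟨comm⟩, ⟨Limits.PushoutCocone.IsColimit.mk comm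
      (fun s ↦ (hex s.inl s.inr s.condition).choose)
      (fun s ↦ (hex s.inl s.inr s.condition).choose_spec.1)
      (fun s ↦ (hex s.inl s.inr s.condition).choose_spec.2)
      fun s m hm1 hm2 ↦ huniq _ _ ?_ ?_⟩⟩
    · rw [hm1, (hex s.inl s.inr s.condition).choose_spec.1]
    · rw [hm2, (hex s.inl s.inr s.condition).choose_spec.2]
  intro T h1 h2 h
  have hloc : ∀ x : P, ∃ W : P.Opens, x ∈ W ∧ ∃ c : W.toScheme ⟶ T,
      k ∣_ W ≫ c = (k ⁻¹ᵁ W).ι ≫ h1 ∧ l ∣_ W ≫ c = (l ⁻¹ᵁ W).ι ≫ h2 := by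
    intro x
    obtain ⟨x, rfl⟩ := hk.surjective x
    obtain ⟨V, hV, hxV, -⟩ := Opens.isBasis_iff_nbhd.1 T.isBasis_affineOpens
      (Opens.mem_top (h1 x))
    -- As `k` is a homeomorphism, `h1 ⁻¹ᵁ V` is the preimage of an open `O` of `P`.
    let O : P.Opens := ⟨k '' (h1 ⁻¹ᵁ V), hk.isOpenMap _ (h1 ⁻¹ᵁ V).2⟩
    obtain ⟨W, hW, hxW, hWO⟩ := Opens.isBasis_iff_nbhd.1 h𝓑
      (show k x ∈ O from ⟨x, hxV, rfl⟩)
    have e1 : k ⁻¹ᵁ W ≤ h1 ⁻¹ᵁ V := by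
      intro y hy
      obtain ⟨z, hz, hzy⟩ := hWO hy
      rwa [← hk.injective hzy]
    refine ⟨W, hxW, exists_desc_of_le_isAffineOpen comm W (hinj W hW) (hsurj W hW) h hV e1 ?_⟩
    -- Surjectivity of `j` transfers the containment from `X` to `Y` through `Z`.
    intro y hy
    obtain ⟨z, rfl⟩ := j.surjective y
    have hz : i z ∈ k ⁻¹ᵁ W := by
      change k (i z) ∈ W
      rw [← Scheme.Hom.comp_apply, comm]
      exact hy
    change h2 (j z) ∈ V
    rw [← Scheme.Hom.comp_apply, ← h]
    exact e1 hz
  choose W hxW c hc1 hc2 using hloc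
  -- After pulling back to any test scheme over `X` or `Y`, the local morphisms are given by
  -- `h1` and `h2`.
  have hc1' (x) {X' : Scheme.{u}} (a : X' ⟶ W x) (b : X' ⟶ X) (hab : a ≫ (W x).ι = b ≫ k) :
      a ≫ c x = b ≫ h1 := by
    have H := isPullback_morphismRestrict k (W x)
    rw [← H.lift_fst a b hab, Category.assoc, hc1, H.lift_snd_assoc]
  have hc2' (x) {X' : Scheme.{u}} (a : X' ⟶ W x) (b : X' ⟶ Y) (hab : a ≫ (W x).ι = b ≫ l) :
      a ≫ c x = b ≫ h2 := by
    have H := isPullback_morphismRestrict l (W x)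
    rw [← H.lift_fst a b hab, Category.assoc, hc2, H.lift_snd_assoc]
  let 𝒰 : P.OpenCover := P.openCoverOfIsOpenCover W
    (top_le_iff.1 fun x _ ↦ Opens.mem_iSup.2 ⟨x, hxW x⟩)
  have hglue (x y : P) : Limits.pullback.fst (W x).ι (W y).ι ≫ c x =
      Limits.pullback.snd (W x).ι (W y).ι ≫ c y := by
    refine hom_ext_of_isOpenImmersion k l hinj' (Limits.pullback.fst (W x).ι (W y).ι ≫ (W x).ι)
      _ _ (fun X' a b hab ↦ ?_) (fun Y' a b hab ↦ ?_)
    · rw [← Category.assoc, ← Category.assoc, hc1' x _ b (by simpa using hab), hc1' y _ b]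
      rw [← hab, Limits.pullback.condition, Category.assoc]
    · rw [← Category.assoc, ← Category.assoc, hc2' x _ b (by simpa using hab), hc2' y _ b]
      rw [← hab, Limits.pullback.condition, Category.assoc]
  let d : P ⟶ T := 𝒰.glueMorphisms c hglue
  have hd (x) : (W x).ι ≫ d = c x := 𝒰.ι_glueMorphisms c hglue x
  refine ⟨d, Scheme.hom_ext_of_forall _ _ fun x ↦ ⟨k ⁻¹ᵁ W (k x), hxW _, ?_⟩,
    Scheme.hom_ext_of_forall _ _ fun y ↦ ⟨l ⁻¹ᵁ W (l y), hxW _, ?_⟩⟩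
  · rw [← hc1, ← hd, ← Category.assoc, ← Category.assoc, morphismRestrict_ι]
  · rw [← hc2, ← hd, ← Category.assoc, ← Category.assoc, morphismRestrict_ι]

end Geometry

/-- `Spec` sends a cartesian square of rings to a pushout square of schemes as soon as `Spec p` is
a homeomorphism and `Spec g` is surjective. -/
theorem isPushout_spec_of_bijective {A' A B B' : CommRingCat.{u}} (f : A ⟶ B) (g : B' ⟶ B)
    (p : A' ⟶ A) (q : A' ⟶ B') (comm : p ≫ f = q ≫ g)
    (hinj : ∀ x, p x = 0 → q x = 0 → x = 0)
    (hsurj : ∀ a b, f a = g b → ∃ x, p x = a ∧ q x = b)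
    (hp : IsHomeomorph (Spec.map p)) [Surjective (Spec.map g)] :
    IsPushout (Spec.map f) (Spec.map g) (Spec.map p) (Spec.map q) := by
  have hc : Spec.map f ≫ Spec.map p = Spec.map g ≫ Spec.map q := by
    rw [← Spec.map_comp, ← Spec.map_comp, comm]
  have hloc (s : A') := by
    letI W : (Spec A').Opens := PrimeSpectrum.basicOpen s
    have i1 : IsLocalization.Away s Γ(Spec A', W) :=
      isLocalization_of_eq_basicOpen s _ rfl
    have i2 : IsLocalization.Away (p.hom s) Γ(Spec A, Spec.map p ⁻¹ᵁ W) :=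
      isLocalization_of_eq_basicOpen _ _ rfl
    have i3 : IsLocalization.Away (q.hom s) Γ(Spec B', Spec.map q ⁻¹ᵁ W) :=
      isLocalization_of_eq_basicOpen _ _ rfl
    have i4 : IsLocalization.Away (f.hom (p.hom s))
        Γ(Spec B, (Spec.map f ≫ Spec.map p) ⁻¹ᵁ W) :=
      isLocalization_of_eq_basicOpen _ _ rfl
    exact fiberProduct_away_bijective p.hom q.hom f.hom g.hom (fun x ↦ congr($comm x)) hinj hsurj s
      ((Spec.map p).app W).hom ((Spec.map q).app W).hom
      ((Spec.map f).appLE (Spec.map p ⁻¹ᵁ W) ((Spec.map f ≫ Spec.map p) ⁻¹ᵁ W) le_rfl).hom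
      ((Spec.map g).appLE (Spec.map q ⁻¹ᵁ W) ((Spec.map f ≫ Spec.map p) ⁻¹ᵁ W)
        (by rw [hc]; rfl)).hom
      (fun x ↦ by rw [Scheme.Hom.app_eq_appLE]; exact appLE_algebraMap _ _ _ _ _)
      (fun x ↦ by rw [Scheme.Hom.app_eq_appLE]; exact appLE_algebraMap _ _ _ _ _)
      (fun x ↦ appLE_algebraMap _ _ _ _ _)
      (fun x ↦ appLE_algebraMap _ _ _ _ _)
  refine isPushout_of_isBasis hc hp
    (PrimeSpectrum.isBasis_basic_opens (R := A')) ?_ ?_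
  · rintro _ ⟨s, rfl⟩
    exact (hloc s).1
  · rintro _ ⟨s, rfl⟩
    exact (hloc s).2

/-- If `g : B' → B` is a surjective ring homomorphism with nilpotent
kernel and `f : A → B` is any ring homomorphism, then applying `Spec` to the fiber
product square of the ring `A' = A ×_B B'` (with its two projections) yields a pushout
square of schemes. -/
theorem isPushout_spec_of_nilpotent_fiberProduct (f : A →+* B) (g : B' →+* B)
    (hg : Function.Surjective g) (hker : IsNilpotent (RingHom.ker g)) :
    IsPushout
      (Spec.map (CommRingCat.ofHom f))
      (Spec.map (CommRingCat.ofHom g))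
      (Spec.map (CommRingCat.ofHom
        ((RingHom.fst A B').comp (fiberProductSubring f g).subtype)))
      (Spec.map (CommRingCat.ofHom
        ((RingHom.snd A B').comp (fiberProductSubring f g).subtype))) := by
  have hnil (b : B') (hb : g b = 0) : IsNilpotent b := by
    obtain ⟨n, hn⟩ := hker
    exact ⟨n, by simpa [hn] using Ideal.pow_mem_pow (show b ∈ RingHom.ker g from hb) n⟩
  have comm : CommRingCat.ofHom ((RingHom.fst A B').comp (fiberProductSubring f g).subtype) ≫
      CommRingCat.ofHom f =
      CommRingCat.ofHom ((RingHom.snd A B').comp (fiberProductSubring f g).subtype) ≫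
      CommRingCat.ofHom g := by
    ext x
    exact x.2
  have hj : Surjective (Spec.map (CommRingCat.ofHom g)) :=
    ⟨(PrimeSpectrum.isHomeomorph_comap g
      (fun x ↦ ⟨1, one_pos, by rw [pow_one]; exact hg x⟩) fun b hb ↦ hnil b hb).surjective⟩
  have hk : IsHomeomorph (Spec.map (CommRingCat.ofHom
      ((RingHom.fst A B').comp (fiberProductSubring f g).subtype))) := by
    refine PrimeSpectrum.isHomeomorph_comap _ (fun a ↦ ⟨1, one_pos, ?_⟩) fun x hx ↦ ?_
    · obtain ⟨b, hb⟩ := hg (f a)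
      exact ⟨⟨(a, b), hb.symm⟩, (pow_one a).symm⟩
    · have hx1 : x.1.1 = 0 := hx
      obtain ⟨n, hn⟩ := hnil x.1.2 (by rw [← show f x.1.1 = g x.1.2 from x.2, hx1, map_zero])
      refine ⟨n + 1, Subtype.ext (Prod.ext ?_ ?_)⟩
      · change x.1.1 ^ (n + 1) = 0
        rw [hx1, pow_succ, mul_zero]
      · change x.1.2 ^ (n + 1) = 0
        rw [pow_succ, hn, zero_mul]
  refine isPushout_spec_of_bijective _ _ _ _ comm
    (fun x h1 h2 ↦ Subtype.ext (Prod.ext h1 h2)) (fun a b hab ↦ ⟨⟨(a, b), hab⟩, rfl, rfl⟩) hk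
end

section
/- Let A be a commutative ring, n a natural number, and F ⊆ Aⁿ an A-submodule that is a direct summand (there exists a submodule G with Aⁿ = F ⊕ G). Write A[ε] for the ring of dual numbers over A, and π : A[ε]ⁿ → Aⁿ for componentwise reduction ε ↦ 0; every v ∈ A[ε]ⁿ is uniquely v₀ + ε·v₁ with v₀, v₁ ∈ Aⁿ. For an A-linear map ψ : F → Aⁿ/F, set F₁(ψ) = {v ∈ A[ε]ⁿ : v₀ ∈ F and the class of v₁ in Aⁿ/F equals ψ(v₀)}. Then each F₁(ψ) is an A[ε]-submodule of A[ε]ⁿ that is a direct summand of A[ε]ⁿ and satisfies π(F₁(ψ)) = F, and the assignment ψ ↦ F₁(ψ) is a bijection from Hom_A(F, Aⁿ/F) onto the set of all A[ε]-submodules F₁ ⊆ A[ε]ⁿ that are direct summands of A[ε]ⁿ and satisfy π(F₁) = F. -/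
/-!
Write `v = v₀ + ε v₁` for `v ∈ A[ε]ⁿ`. If `G` is a complement of `F` in `Aⁿ`, then
`{v | v₀ ∈ G, v₁ ∈ G}`, which is `F₁(0)` formed for `G`, is a complement of every `F₁(ψ)`
formed for `F`. Lifting `ψ f` to `Aⁿ` shows that each `f ∈ F` extends to some
`f + ε w ∈ F₁(ψ)`; hence `F₁(ψ)` reduces onto `F` and determines `ψ`.

For surjectivity, let `F₁` be a direct summand with `π(F₁) = F`. The key point
(`mkDual_zero_mem_iff`) is that `ε w ∈ F₁ ↔ w ∈ F`. Thus the class in `Aⁿ/F` of `v₁`, for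
`v ∈ F₁`, depends only on `v₀`, and sending `v₀` to it is the required linear map `ψ`.
-/

variable (A : Type*) [CommRing A] (n : ℕ)

/-- The reduction `ε ↦ 0` on dual numbers, as a ring homomorphism. -/
def dualFst : DualNumber A →+* A where
  toFun := TrivSqZeroExt.fst
  map_one' := rfl
  map_mul' := fun x y => TrivSqZeroExt.fst_mul x y
  map_zero' := rfl
  map_add' := fun x y => rfl

instance : RingHomSurjective (dualFst A) :=
  ⟨fun a => ⟨TrivSqZeroExt.inl a, rfl⟩⟩

/-- Componentwise reduction `A[ε]ⁿ → Aⁿ`, semilinear over `ε ↦ 0`. -/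
def dualReduce : (Fin n → DualNumber A) →ₛₗ[dualFst A] (Fin n → A) where
  toFun v := fun i => (v i).fst
  map_add' v w := by
    funext i
    exact TrivSqZeroExt.fst_add (v i) (w i)
  map_smul' c v := by
    funext i
    show (c * v i).fst = c.fst * (v i).fst
    exact TrivSqZeroExt.fst_mul c (v i)

variable {A n}

/-- For a direct summand `F ⊆ Aⁿ` and `ψ : F →ₗ[A] Aⁿ/F`, the `A[ε]`-submodule
`F₁(ψ) = {v : v₀ ∈ F and [v₁] = ψ v₀}` of `A[ε]ⁿ`. -/
def grassTangent (F : Submodule A (Fin n → A))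
    (ψ : F →ₗ[A] ((Fin n → A) ⧸ F)) :
    Submodule (DualNumber A) (Fin n → DualNumber A) where
  carrier := {v | ∃ h : (fun i => (v i).fst) ∈ F,
    F.mkQ (fun i => (v i).snd) = ψ ⟨fun i => (v i).fst, h⟩}
  zero_mem' := ⟨F.zero_mem, by
    show F.mkQ 0 = ψ 0
    simp⟩
  add_mem' := by
    rintro v w ⟨hv0, hv1⟩ ⟨hw0, hw1⟩
    have e0 : (fun i => ((v + w) i).fst)
        = (fun i => (v i).fst) + fun i => (w i).fst := by
      funext i; exact TrivSqZeroExt.fst_add (v i) (w i)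
    refine ⟨by rw [e0]; exact F.add_mem hv0 hw0, ?_⟩
    have e1 : (fun i => ((v + w) i).snd)
        = (fun i => (v i).snd) + fun i => (w i).snd := by
      funext i; exact TrivSqZeroExt.snd_add (v i) (w i)
    rw [e1, map_add, hv1, hw1, ← map_add]
    exact congrArg ψ (Subtype.ext (funext fun i => TrivSqZeroExt.fst_add (v i) (w i)))
  smul_mem' := by
    intro c v hv
    obtain ⟨h0, h1⟩ := hv
    have e0 : (fun i => ((c • v) i).fst)
        = TrivSqZeroExt.fst c • fun i => (v i).fst := by
      funext i; exact TrivSqZeroExt.fst_mul c (v i)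
    refine ⟨by rw [e0]; exact F.smul_mem _ h0, ?_⟩
    have e1 : (fun i => ((c • v) i).snd)
        = TrivSqZeroExt.fst c • (fun i => (v i).snd)
          + TrivSqZeroExt.snd c • fun i => (v i).fst := by
      funext i
      show (c * v i).snd = TrivSqZeroExt.fst c * (v i).snd
        + TrivSqZeroExt.snd c * (v i).fst
      rw [TrivSqZeroExt.snd_mul]
      simp [smul_eq_mul, MulOpposite.smul_eq_mul_unop, mul_comm]
    have hz : F.mkQ (fun i => (v i).fst) = 0 := by
      rw [Submodule.mkQ_apply, Submodule.Quotient.mk_eq_zero]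
      exact h0
    rw [e1, map_add, map_smul, map_smul, h1, hz, smul_zero, add_zero, ← map_smul]
    exact congrArg ψ (Subtype.ext
      (funext fun i => (TrivSqZeroExt.fst_mul c (v i)).symm))

/-- The vector `a + ε b` of `A[ε]ⁿ`. -/
def mkDual (a b : Fin n → A) : Fin n → DualNumber A := fun i => (a i, b i)

@[simp]
lemma fst_mkDual (a b : Fin n → A) (i : Fin n) : (mkDual a b i).fst = a i := rfl

@[simp]
lemma snd_mkDual (a b : Fin n → A) (i : Fin n) : (mkDual a b i).snd = b i := rfl

lemma mkDual_eta (v : Fin n → DualNumber A) :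
    mkDual (fun i => (v i).fst) (fun i => (v i).snd) = v := rfl

lemma mkDual_add (a b c d : Fin n → A) :
    mkDual a b + mkDual c d = mkDual (a + c) (b + d) := rfl

lemma mkDual_sub (a b c d : Fin n → A) :
    mkDual a b - mkDual c d = mkDual (a - c) (b - d) := rfl

lemma inl_smul_mkDual (r : A) (a b : Fin n → A) :
    (TrivSqZeroExt.inl r : DualNumber A) • mkDual a b = mkDual (r • a) (r • b) := by
  funext i
  refine TrivSqZeroExt.ext ?_ ?_ <;> simp

lemma eps_smul_mkDual (a b : Fin n → A) :
    (DualNumber.eps : DualNumber A) • mkDual a b = mkDual 0 a := by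
  funext i
  refine TrivSqZeroExt.ext ?_ ?_ <;> simp

lemma mkDual_mem_grassTangent {F : Submodule A (Fin n → A)}
    {ψ : F →ₗ[A] ((Fin n → A) ⧸ F)} {a b : Fin n → A} :
    mkDual a b ∈ grassTangent F ψ ↔ ∃ h : a ∈ F, F.mkQ b = ψ ⟨a, h⟩ := Iff.rfl

lemma mkDual_mem_grassTangent_zero {G : Submodule A (Fin n → A)} {a b : Fin n → A} :
    mkDual a b ∈ grassTangent G 0 ↔ a ∈ G ∧ b ∈ G := by
  rw [mkDual_mem_grassTangent]
  simp

lemma exists_mkDual_mem_grassTangent (F : Submodule A (Fin n → A))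
    (ψ : F →ₗ[A] ((Fin n → A) ⧸ F)) (f : F) :
    ∃ w, F.mkQ w = ψ f ∧ mkDual (f : Fin n → A) w ∈ grassTangent F ψ := by
  obtain ⟨w, hw⟩ := F.mkQ_surjective (ψ f)
  exact ⟨w, hw, f.2, hw⟩

lemma isCompl_grassTangent {F G : Submodule A (Fin n → A)} (h : IsCompl F G)
    (ψ : F →ₗ[A] ((Fin n → A) ⧸ F)) :
    IsCompl (grassTangent F ψ) (grassTangent G 0) := by
  have hdisj := Submodule.disjoint_def.1 h.disjoint
  refine ⟨Submodule.disjoint_def.2 fun v hv hv' => ?_, codisjoint_iff_le_sup.2 fun v _ => ?_⟩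
  · rw [← mkDual_eta v] at hv hv' ⊢
    generalize (fun i => (v i).fst) = a at *
    generalize (fun i => (v i).snd) = b at *
    obtain ⟨ha, hb⟩ := mkDual_mem_grassTangent.1 hv
    obtain ⟨ha', hb'⟩ := mkDual_mem_grassTangent_zero.1 hv'
    obtain rfl := hdisj a ha ha'
    have hbF : b ∈ F := by
      have h0 : F.mkQ b = 0 := hb.trans (map_zero ψ)
      simpa using h0
    obtain rfl := hdisj b hbF hb'
    rfl
  · rw [← mkDual_eta v]
    generalize (fun i => (v i).fst) = a at *
    generalize (fun i => (v i).snd) = b at *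
    have hsum (x : Fin n → A) : ∃ y ∈ F, ∃ z ∈ G, y + z = x :=
      Submodule.mem_sup.1 (h.sup_eq_top ▸ Submodule.mem_top)
    obtain ⟨f, hf, g, hg, rfl⟩ := hsum a
    obtain ⟨w, hw, -⟩ := exists_mkDual_mem_grassTangent F ψ ⟨f, hf⟩
    -- Only the component of `v₁ - w` along `G` has to be moved out of `F₁(ψ)`.
    obtain ⟨f', hf', g', hg', e⟩ := hsum (b - w)
    refine Submodule.mem_sup.2 ⟨mkDual f (w + f'), ⟨hf, ?_⟩, mkDual g g',
      mkDual_mem_grassTangent_zero.2 ⟨hg, hg'⟩, ?_⟩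
    · have h0 : F.mkQ f' = 0 := by simpa using hf'
      change F.mkQ (w + f') = ψ ⟨f, hf⟩
      rw [map_add, h0, add_zero, hw]
    · rw [mkDual_add, add_assoc, e, add_sub_cancel]

lemma map_dualReduce_grassTangent (F : Submodule A (Fin n → A))
    (ψ : F →ₗ[A] ((Fin n → A) ⧸ F)) :
    Submodule.map (dualReduce A n) (grassTangent F ψ) = F := by
  ext f
  constructor
  · rintro ⟨v, ⟨hv, -⟩, rfl⟩
    exact hv
  · intro hf
    obtain ⟨w, -, hw⟩ := exists_mkDual_mem_grassTangent F ψ ⟨f, hf⟩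
    exact ⟨_, hw, rfl⟩

lemma grassTangent_injective (F : Submodule A (Fin n → A)) :
    Function.Injective (grassTangent F) := by
  intro ψ ψ' h
  ext1 f
  obtain ⟨w, hw, hmem⟩ := exists_mkDual_mem_grassTangent F ψ f
  rw [h] at hmem
  obtain ⟨_, hw'⟩ := mkDual_mem_grassTangent.1 hmem
  exact hw.symm.trans hw'

/-- A direct summand `F₁` of `A[ε]ⁿ` meets `ε A[ε]ⁿ` exactly in `ε F₁`, which is identified
with `π(F₁)`. -/
lemma mkDual_zero_mem_iff {F₁ G₁ : Submodule (DualNumber A) (Fin n → DualNumber A)}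
    (h : IsCompl F₁ G₁) (w : Fin n → A) :
    mkDual 0 w ∈ F₁ ↔ w ∈ Submodule.map (dualReduce A n) F₁ := by
  constructor
  · intro hw
    obtain ⟨y, hy, z, hz, e⟩ : ∃ y ∈ F₁, ∃ z ∈ G₁, y + z = mkDual w 0 :=
      Submodule.mem_sup.1 (h.sup_eq_top ▸ Submodule.mem_top)
    have e' : (DualNumber.eps : DualNumber A) • y + (DualNumber.eps : DualNumber A) • z
        = mkDual 0 w := by
      rw [← smul_add, e, eps_smul_mkDual]
    -- `ε z = ε w - ε y` lies in both summands, so it vanishes and `ε w = ε y`.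
    have hz0 : (DualNumber.eps : DualNumber A) • z = 0 := by
      refine Submodule.disjoint_def.1 h.disjoint _ ?_ (G₁.smul_mem _ hz)
      rw [← eq_sub_iff_add_eq'] at e'
      rw [e']
      exact F₁.sub_mem hw (F₁.smul_mem _ hy)
    refine ⟨y, hy, ?_⟩
    rw [hz0, add_zero, ← mkDual_eta y, eps_smul_mkDual] at e'
    funext i
    exact congrArg TrivSqZeroExt.snd (congrFun e' i)
  · rintro ⟨y, hy, rfl⟩
    have := F₁.smul_mem DualNumber.eps hy
    rwa [← mkDual_eta y, eps_smul_mkDual] at this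

lemma exists_grassTangent_eq {F : Submodule A (Fin n → A)}
    {F₁ G₁ : Submodule (DualNumber A) (Fin n → DualNumber A)} (h : IsCompl F₁ G₁)
    (hF : Submodule.map (dualReduce A n) F₁ = F) : ∃ ψ, grassTangent F ψ = F₁ := by
  have key : ∀ w, mkDual 0 w ∈ F₁ ↔ w ∈ F := fun w => hF ▸ mkDual_zero_mem_iff h w
  have hlift : ∀ f : F, ∃ w, mkDual (f : Fin n → A) w ∈ F₁ := by
    rintro ⟨f, hf⟩
    rw [← hF] at hf
    obtain ⟨v, hv, rfl⟩ := hf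
    exact ⟨fun i => (v i).snd, hv⟩
  choose s hs using hlift
  have huniq : ∀ {a b c : Fin n → A}, mkDual a c ∈ F₁ →
      (mkDual a b ∈ F₁ ↔ F.mkQ b = F.mkQ c) := by
    intro a b c hc
    rw [← F₁.sub_mem_iff_left hc, mkDual_sub, sub_self, key]
    exact (Submodule.Quotient.eq F).symm
  let ψ : F →ₗ[A] ((Fin n → A) ⧸ F) :=
    { toFun := fun f => F.mkQ (s f)
      map_add' := fun f g => by
        rw [← map_add]
        refine (huniq (a := (f : Fin n → A) + g) ?_).1 (hs (f + g))
        rw [← mkDual_add]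
        exact F₁.add_mem (hs f) (hs g)
      map_smul' := fun r f => by
        rw [RingHom.id_apply, ← map_smul]
        refine (huniq (a := r • (f : Fin n → A)) ?_).1 (hs (r • f))
        rw [← inl_smul_mkDual]
        exact F₁.smul_mem _ (hs f) }
  refine ⟨ψ, Submodule.ext fun v => ?_⟩
  constructor
  · rintro ⟨h0, h1⟩
    exact (huniq (hs ⟨_, h0⟩)).2 h1
  · intro hv
    have h0 : (fun i => (v i).fst) ∈ F := hF ▸ ⟨v, hv, rfl⟩
    exact ⟨h0, (huniq (hs ⟨_, h0⟩)).1 hv⟩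

/-- Let `F ⊆ Aⁿ` be a direct summand.  For every `A`-linear
`ψ : F → Aⁿ/F`, the `A[ε]`-submodule `F₁(ψ) ⊆ A[ε]ⁿ` is a direct summand reducing to
`F` modulo `ε`, and `ψ ↦ F₁(ψ)` is injective with range exactly the set of direct
summands `F₁ ⊆ A[ε]ⁿ` whose image under the reduction `ε ↦ 0` is `F`.  (That is, the
tangent space of the Grassmannian at `F` is `Hom_A(F, Aⁿ/F)`.) -/
theorem grassTangent_bijective {A : Type*} [CommRing A] {n : ℕ}
    (F : Submodule A (Fin n → A)) (hF : ∃ G, IsCompl F G) :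
    (∀ ψ : F →ₗ[A] ((Fin n → A) ⧸ F),
        (∃ G₁, IsCompl (grassTangent F ψ) G₁) ∧
          Submodule.map (dualReduce A n) (grassTangent F ψ) = F) ∧
      Function.Injective (grassTangent F) ∧
      Set.range (grassTangent F) =
        {F₁ : Submodule (DualNumber A) (Fin n → DualNumber A) |
          (∃ G₁, IsCompl F₁ G₁) ∧ Submodule.map (dualReduce A n) F₁ = F} := by
  obtain ⟨G, hG⟩ := hF
  have hmem : ∀ ψ : F →ₗ[A] ((Fin n → A) ⧸ F),
      (∃ G₁, IsCompl (grassTangent F ψ) G₁) ∧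
        Submodule.map (dualReduce A n) (grassTangent F ψ) = F := fun ψ =>
    ⟨⟨_, isCompl_grassTangent hG ψ⟩, map_dualReduce_grassTangent F ψ⟩
  refine ⟨hmem, grassTangent_injective F, Set.Subset.antisymm ?_ ?_⟩
  · rintro _ ⟨ψ, rfl⟩
    exact hmem ψ
  · rintro F₁ ⟨⟨G₁, hG₁⟩, hF₁⟩
    exact exists_grassTangent_eq hG₁ hF₁
end

section
/- Let (A_i, f_{ij}) be a directed system of commutative rings over a directed index set (equivalently, a filtered diagram in the category of commutative rings) and let A = colim A_i be its colimit, with canonical maps A_i → A. Then for every étale A-algebra B there exist an index i, an étale A_i-algebra B_i, and an isomorphism of A-algebras A ⊗_{A_i} B_i ≅ B. -/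
/-!
An étale `A`-algebra `B` is already defined over a finitely generated `ℤ`-subalgebra `A₀` of `A`:
there is an étale `A₀`-algebra `B₀` with `B ≃ A ⊗[A₀] B₀` (`Algebra.Etale.exists_subalgebra_fg`).
Since `ℤ` is Noetherian, `A₀` is finitely presented over `ℤ`, so the inclusion
`A₀ → A = colim Aᵢ` factors through some `Aᵢ` (`exists_factor_of_finitePresentation_int`).
Then `Bᵢ = Aᵢ ⊗[A₀] B₀` is étale over `Aᵢ`, and transitivity of base change gives
`A ⊗[Aᵢ] Bᵢ ≃ A ⊗[A₀] B₀ ≃ B`.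
-/

open TensorProduct

universe u

/-- A ring homomorphism from a finitely presented `ℤ`-algebra to a directed colimit of rings
factors through one of the rings: the images of the finitely many generators come from a common
stage, and the finitely many relations among them hold at some later stage. -/
theorem exists_factor_of_finitePresentation_int {ι : Type*} [Preorder ι]
    [IsDirected ι (· ≤ ·)] [Nonempty ι] (G : ι → Type*) [∀ i, CommRing (G i)]
    (f : ∀ i j, i ≤ j → G i →+* G j) [DirectedSystem G fun i j h => f i j h]
    {S : Type*} [CommRing S] [Algebra.FinitePresentation ℤ S]
    (g : S →+* Ring.DirectLimit G fun i j h => f i j h) :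
    ∃ (i : ι) (h : S →+* G i), (Ring.DirectLimit.of G (fun i j h => f i j h) i).comp h = g := by
  obtain ⟨n, π, hπ, s, hs⟩ := Algebra.FinitePresentation.out (R := ℤ) (A := S)
  choose a x hx using fun k : Fin n => Ring.DirectLimit.exists_of (g (π (MvPolynomial.X k)))
  obtain ⟨i, hi⟩ := Finite.exists_le a
  -- The lift to stage `i` on the polynomial ring; the relations need not hold there yet.
  let g' : MvPolynomial (Fin n) ℤ →+* G i :=
    MvPolynomial.eval₂Hom (Int.castRingHom (G i)) fun k => f (a k) i (hi k) (x k)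
  have hg' : (Ring.DirectLimit.of G (fun i j h => f i j h) i).comp g'
      = g.comp (π : MvPolynomial (Fin n) ℤ →+* S) := by
    apply MvPolynomial.ringHom_ext
    · intro r
      simp
    · intro k
      simp [g', hx]
  have key : ∀ r : s, ∃ (j : ι) (hij : i ≤ j), f i j hij (g' r) = 0 := by
    intro r
    apply Ring.DirectLimit.of.zero_exact
    have h0 : π r = 0 := hs.le (Ideal.subset_span r.2)
    have h1 := congr($hg' r)
    simpa [h0] using h1
  choose b hib hb using key
  obtain ⟨j₀, hj₀⟩ := Finite.exists_le b
  obtain ⟨j, hij, hj⟩ := exists_ge_ge i j₀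
  have hker : RingHom.ker (π : MvPolynomial (Fin n) ℤ →+* S) ≤
      RingHom.ker ((f i j hij).comp g') := by
    change RingHom.ker π.toRingHom ≤ _
    rw [← hs, Ideal.span_le]
    intro r hr
    have h1 := DirectedSystem.map_map' (f := fun i j h => f i j h) (hib ⟨r, hr⟩)
      ((hj₀ ⟨r, hr⟩).trans hj) (g' r)
    rw [hb ⟨r, hr⟩, map_zero] at h1
    exact h1.symm
  refine ⟨j, RingHom.liftOfSurjective (π : MvPolynomial (Fin n) ℤ →+* S) hπ ⟨_, hker⟩, ?_⟩
  ext y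
  obtain ⟨p, rfl⟩ := hπ y
  have h1 : RingHom.liftOfSurjective (π : MvPolynomial (Fin n) ℤ →+* S) hπ
      ⟨(f i j hij).comp g', hker⟩ (π p) = f i j hij (g' p) :=
    RingHom.liftOfRightInverse_comp_apply _ _ _ _ _
  rw [RingHom.comp_apply, h1, Ring.DirectLimit.of_f]
  exact congr($hg' p)

/-- Let `A = colim Aᵢ` be the colimit of a directed system of
commutative rings.  Every étale `A`-algebra `B` descends to an étale `Aᵢ`-algebra
`Bᵢ` for some index `i`, together with an `A`-algebra isomorphism `A ⊗[Aᵢ] Bᵢ ≃ B`. -/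
theorem etale_descends_directLimit {ι : Type u} [Preorder ι] [IsDirected ι (· ≤ ·)]
    [Nonempty ι] (G : ι → Type u) [∀ i, CommRing (G i)]
    (f : ∀ i j, i ≤ j → G i →+* G j)
    [DirectedSystem G fun i j h => f i j h]
    (B : Type u) [CommRing B]
    [Algebra (Ring.DirectLimit G fun i j h => f i j h) B]
    [Algebra.Etale (Ring.DirectLimit G fun i j h => f i j h) B] :
    ∃ (i : ι) (Bi : Type u) (_ : CommRing Bi) (_ : Algebra (G i) Bi),
      letI : Algebra (G i) (Ring.DirectLimit G fun i j h => f i j h) :=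
        (Ring.DirectLimit.of G (fun i j h => f i j h) i).toAlgebra
      Algebra.Etale (G i) Bi ∧
        Nonempty (((Ring.DirectLimit G fun i j h => f i j h) ⊗[G i] Bi)
          ≃ₐ[Ring.DirectLimit G fun i j h => f i j h] B) := by
  obtain ⟨A₀, B₀, _, _, hfg, _, ⟨e⟩⟩ :=
    Algebra.Etale.exists_subalgebra_fg ℤ (Ring.DirectLimit G fun i j h => f i j h) B
  have : Algebra.FiniteType ℤ A₀ := (Subalgebra.fg_iff_finiteType A₀).mp hfg
  have : Algebra.FinitePresentation ℤ A₀ :=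
    Algebra.FinitePresentation.of_finiteType.mp inferInstance
  obtain ⟨i, h, hh⟩ := exists_factor_of_finitePresentation_int G f
    (algebraMap A₀ (Ring.DirectLimit G fun i j h => f i j h))
  let : Algebra (G i) (Ring.DirectLimit G fun i j h => f i j h) :=
    (Ring.DirectLimit.of G (fun i j h => f i j h) i).toAlgebra
  let : Algebra A₀ (G i) := h.toAlgebra
  have : IsScalarTower A₀ (G i) (Ring.DirectLimit G fun i j h => f i j h) :=
    IsScalarTower.of_algebraMap_eq' hh.symm
  exact ⟨i, G i ⊗[A₀] B₀, inferInstance, inferInstance, inferInstance,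
    ⟨(Algebra.TensorProduct.cancelBaseChange A₀ (G i) (Ring.DirectLimit G fun i j h => f i j h)
      (Ring.DirectLimit G fun i j h => f i j h) B₀).trans e.symm⟩⟩
end
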